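/- arXiv:2206.11809 — 4 statements merged into one kernel-verified Lean document; each statement's English description precedes it below -/
import Mathlib

section
/- (AJN inequality, finiteness) For a datum (c,d,B), the constant C_g(c,d,B) is finite if and only if both of the following hold: (scaling condition) Σ_{i=1}^k c_i dim(E_i) = Σ_{j=1}^m d_j dim(E^j); and (dimension condition) for every product-form subspace T ⊂ E_0, Σ_{i=1}^k c_i dim(π_{E_i}T) ≤ Σ_{j=1}^m d_j dim(B_j T). -/
/-!
Gaussian entropies are log-determinants, so on independent Gaussians with covariances `Kᵢ` the AJN
functional is, up to an additive constant, half of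
`detGap K = ∑ cᵢ log det Kᵢ - ∑ dⱼ log det (Bⱼ diag(K₁,…,K_k) Bⱼᵀ)`, provided every `Bⱼ` is
surjective; if some `Bⱼ` is not surjective, the law of `Bⱼ X` is singular and the functional is `⊤`.
Hence `C_g` is finite iff all `Bⱼ` are surjective and `detGap` is bounded above (`Cg_finite_iff`).
The Gaussian facts behind this (a nondegenerate Gaussian is an affine image of a standard one, and
the law of a linear image of a standard Gaussian depends only on its covariance) are
`gaussianM_eq_map` and `stdG_map_congr`.

*Necessity.* Along `Kᵢ = t • 1` the functional `detGap` is affine in `log t` with slope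
`∑ cᵢ nᵢ - ∑ dⱼ pⱼ`, which must therefore vanish (`scaling_of_bounded`). For `T = ⊕ Tᵢ`, take
matrices `Qᵢ` with range `Tᵢ` and `Kᵢ = 1 + s Qᵢ Qᵢᵀ`: as `s → ∞`, the determinant of `Kᵢ` grows at
least like `s ^ dim Tᵢ`, that of `Bⱼ diag(K) Bⱼᵀ` at most like `s ^ dim (Bⱼ T)`, and boundedness
gives the dimension condition (`dimension_of_bounded`).

*Sufficiency.* Surjectivity of the `Bⱼ` follows from the scaling condition and the dimension
condition for `T = E₀`. Write `Kᵢ = Uᵢ diag(λ) Uᵢᵀ`. For `g` any choice of `pⱼ` columns of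
`Bⱼ diag(U)`, the Cauchy–Binet formula gives
`log det (Bⱼ diag(K) Bⱼᵀ) ≥ ∑ₐ log λ_{g a} + 2 log |minor_g|`. Near a fixed `U₀`, choose `g`
greedily at `U₀` along decreasing eigenvalues (`exists_greedy`): this `g` picks from the columns with
the `m` largest eigenvalues as many as the dimension of their span, and its minor stays away from
`0`. What is left, `∑_q c_q log λ_q - ∑ⱼ dⱼ ∑ₐ log λ_{gⱼ a}`, is a linear form in the decreasing
sequence `log λ`; by the dimension condition its initial partial sums of coefficients are
nonpositive and by the scaling condition their total vanishes, so summation by parts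
(`abel_nonpos`) shows that it is nonpositive. This bounds `detGap` locally uniformly in `U`
(`local_bound`), and compactness of the orthogonal groups makes the bound global
(`detGap_bounded`).
-/

open MeasureTheory ProbabilityTheory Matrix Real
open scoped ENNReal

noncomputable section

open Classical in
/-- Differential entropy (w.r.t. the canonical volume), with the convention `⊥` when undefined. -/
noncomputable def ent {α : Type*} [MeasureSpace α] (μ : Measure α) : EReal :=
  if μ ≪ (volume : Measure α) ∧
      Integrable (fun x => Real.log ((μ.rnDeriv volume x).toReal)) μ
  then (((- ∫ x, Real.log ((μ.rnDeriv volume x).toReal) ∂μ) : ℝ) : EReal)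
  else ⊥

/-- `μ ∈ 𝒫(E)`: probability measure with finite entropy and finite second moments. -/
def MemP {α : Type*} [MeasureSpace α] [NormedAddCommGroup α] (μ : Measure α) : Prop :=
  IsProbabilityMeasure μ ∧ μ ≪ (volume : Measure α) ∧
    Integrable (fun x => Real.log ((μ.rnDeriv volume x).toReal)) μ ∧
    Integrable (fun x => ‖x‖ ^ 2) μ

/-- Gaussian measure `N(m, K)` on `ι → ℝ` (for positive definite `K`). -/
noncomputable def gaussianM {ι : Type*} [Fintype ι] [DecidableEq ι]
    (m : ι → ℝ) (K : Matrix ι ι ℝ) : Measure (ι → ℝ) :=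
  volume.withDensity fun x =>
    ENNReal.ofReal (Real.sqrt (((2 * π) ^ Fintype.card ι * K.det)⁻¹) *
      Real.exp (-((x - m) ⬝ᵥ (K⁻¹).mulVec (x - m)) / 2))

/-- A (nondegenerate) Gaussian measure on `ι → ℝ`. -/
def IsGaussianM {ι : Type*} [Fintype ι] [DecidableEq ι] (μ : Measure (ι → ℝ)) : Prop :=
  ∃ (m : ι → ℝ) (K : Matrix ι ι ℝ), K.PosDef ∧ μ = gaussianM m K

/-- Index set of `E₀ = ⊕ᵢ Eᵢ`. -/
abbrev Idx {k : ℕ} (n : Fin k → ℕ) := (i : Fin k) × Fin (n i)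

/-- Coordinate projection `π_{Eᵢ} : E₀ → Eᵢ`. -/
def proj {k : ℕ} (n : Fin k → ℕ) (i : Fin k) : (Idx n → ℝ) → (Fin (n i) → ℝ) :=
  fun x a => x ⟨i, a⟩

/-- Matrix of the coordinate projection `π_{Eᵢ}`. -/
def projMat {k : ℕ} (n : Fin k → ℕ) (i : Fin k) : Matrix (Fin (n i)) (Idx n) ℝ :=
  Matrix.of fun a q => if q = ⟨i, a⟩ then 1 else 0

/-- Block-diagonal operator `diag(K₁, …, K_k)` on `E₀`. -/
def blockDiag {k : ℕ} (n : Fin k → ℕ) (K : ∀ i, Matrix (Fin (n i)) (Fin (n i)) ℝ) :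
    Matrix (Idx n) (Idx n) ℝ :=
  ∑ i, (projMat n i)ᵀ * K i * projMat n i

/-- The joint law of independent random vectors `Xᵢ ∼ μᵢ`, as a measure on `E₀`. -/
noncomputable def jointM {k : ℕ} (n : Fin k → ℕ) (μ : ∀ i, Measure (Fin (n i) → ℝ)) :
    Measure (Idx n → ℝ) :=
  (Measure.pi μ).map fun f q => f q.1 q.2

/-- The AJN functional `Σᵢ cᵢ h(Xᵢ) − Σⱼ dⱼ h(Bⱼ X)` of a joint law `μ₀` on `E₀`. -/
noncomputable def AJNgap {k l : ℕ} (n : Fin k → ℕ) (p : Fin l → ℕ)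
    (c : Fin k → ℝ) (d : Fin l → ℝ) (B : ∀ j, Matrix (Fin (p j)) (Idx n) ℝ)
    (μ0 : Measure (Idx n → ℝ)) : EReal :=
  (∑ i, (c i : EReal) * ent (μ0.map (proj n i))) -
    ∑ j, (d j : EReal) * ent (μ0.map ((B j).mulVec))

/-- `C_g(c,d,B)`: the supremum of the AJN functional over independent Gaussians. -/
noncomputable def Cg {k l : ℕ} (n : Fin k → ℕ) (p : Fin l → ℕ)
    (c : Fin k → ℝ) (d : Fin l → ℝ) (B : ∀ j, Matrix (Fin (p j)) (Idx n) ℝ) : EReal :=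
  sSup { r : EReal | ∃ μ : ∀ i, Measure (Fin (n i) → ℝ),
    (∀ i, IsGaussianM (μ i)) ∧ r = AJNgap n p c d B (jointM n μ) }

/-- AJN-geometric datum. -/
def IsGeometric {k l : ℕ} (n : Fin k → ℕ) (p : Fin l → ℕ)
    (c : Fin k → ℝ) (d : Fin l → ℝ) (B : ∀ j, Matrix (Fin (p j)) (Idx n) ℝ) : Prop :=
  (∀ j, B j * (B j)ᵀ = 1) ∧
  (∀ i, ∑ j, d j • (projMat n i * (B j)ᵀ * B j * (projMat n i)ᵀ) =
      c i • (1 : Matrix (Fin (n i)) (Fin (n i)) ℝ))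

end


/-- A product-form subspace `T = ⊕ᵢ Tᵢ ⊆ E₀`. -/
def IsProductForm {k : ℕ} (n : Fin k → ℕ) (T : Submodule ℝ (Idx n → ℝ)) : Prop :=
  ∃ T' : ∀ i, Submodule ℝ (Fin (n i) → ℝ),
    T = ⨆ i, (T' i).map (Matrix.mulVecLin (projMat n i)ᵀ)

/-! ### Determinant estimates -/

/-- The determinant is monotone when a positive semidefinite matrix is added: this is checked one
rank-one summand at a time with the matrix determinant lemma. -/
theorem det_add_psd_ge {m : Type*} [Fintype m] [DecidableEq m] {A C : Matrix m m ℝ}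
    (hA : A.PosDef) (hC : C.PosSemidef) : A.det ≤ (A + C).det := by
  obtain ⟨N, v, rfl⟩ := Matrix.posSemidef_iff_eq_sum_vecMulVec.1 hC
  suffices h : ∀ s : Finset (Fin N), A.det ≤ (A + ∑ i ∈ s, vecMulVec (v i) (star (v i))).det from
    h _
  intro s
  induction s using Finset.induction_on with
  | empty => simp
  | insert a s ha ih =>
    have hP : (A + ∑ i ∈ s, vecMulVec (v i) (star (v i))).PosDef :=
      hA.add_posSemidef (Matrix.posSemidef_sum _ fun i _ => Matrix.posSemidef_vecMulVec_self_star _)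
    rw [Finset.sum_insert ha, add_comm (vecMulVec _ _), ← add_assoc]
    refine ih.trans ?_
    rw [vecMulVec_eq Unit, det_add_replicateCol_mul_replicateRow hP.det_pos.ne'.isUnit]
    refine le_mul_of_one_le_right hP.det_pos.le ?_
    have h0 := hP.inv.posSemidef.dotProduct_mulVec_nonneg (v a)
    rw [det_unique, Matrix.add_apply, Matrix.one_apply_eq, le_add_iff_nonneg_right]
    convert h0 using 1
    simp [Matrix.mul_apply, dotProduct, mulVec, Finset.mul_sum, Finset.sum_mul]
    rw [Finset.sum_comm]
    simp [mul_assoc]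

/-- Every subspace of `ℝᵖ` is the range of an injective matrix. -/
theorem exists_matrix_range {p : Type*} [Fintype p] (W : Submodule ℝ (p → ℝ)) :
    ∃ R : Matrix p (Fin (Module.finrank ℝ W)) ℝ,
      LinearMap.range (mulVecLin R) = W ∧ Function.Injective (mulVecLin R) := by
  classical
  let b := Module.finBasis ℝ W
  let f : (Fin (Module.finrank ℝ W) → ℝ) →ₗ[ℝ] (p → ℝ) := W.subtype ∘ₗ b.equivFun.symm.toLinearMap
  refine ⟨LinearMap.toMatrix' f, ?_, ?_⟩
  · rw [← Matrix.toLin'_apply', Matrix.toLin'_toMatrix', LinearMap.range_comp]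
    simp
  · rw [← Matrix.toLin'_apply', Matrix.toLin'_toMatrix']
    exact W.injective_subtype.comp b.equivFun.symm.injective

/-- A matrix factors through any matrix whose range contains its own. -/
theorem exists_factor {p r m : Type*} [Fintype p] [Fintype r] [Fintype m]
    (M : Matrix p m ℝ) (R : Matrix p r ℝ)
    (h : LinearMap.range (mulVecLin M) ≤ LinearMap.range (mulVecLin R)) :
    ∃ S : Matrix r m ℝ, M = R * S := by
  classical
  have : ∀ q : m, ∃ y : r → ℝ, R *ᵥ y = M.col q := by
    intro q
    have := h ⟨Pi.single q 1, rfl⟩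
    obtain ⟨y, hy⟩ := this
    exact ⟨y, by simpa using hy⟩
  choose y hy using this
  refine ⟨Matrix.of fun a q => y q a, ?_⟩
  ext a q
  have := congrFun (hy q) a
  simpa [Matrix.mul_apply, mulVec, dotProduct] using this.symm

/-- `det (A + s M Mᵀ)` grows at most like `s` to the power `rank M`: by the
Weinstein–Aronszajn identity it reduces to a determinant of size `rank M`, with entries `O(s)`. -/
theorem det_add_smul_le {p m : Type*} [Fintype p] [DecidableEq p] [Fintype m]
    {A : Matrix p p ℝ} (hA : A.PosDef) (M : Matrix p m ℝ) :
    ∃ C : ℝ, 0 < C ∧ ∀ s : ℝ, 1 ≤ s → (A + s • (M * Mᵀ)).det ≤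
      C * s ^ Module.finrank ℝ (LinearMap.range (mulVecLin M)) := by
  classical
  obtain ⟨R, hR, -⟩ := exists_matrix_range (LinearMap.range (mulVecLin M))
  obtain ⟨S, hS⟩ := exists_factor M R hR.ge
  generalize Module.finrank ℝ (LinearMap.range (mulVecLin M)) = r at R S hR hS ⊢
  let X : Matrix (Fin r) (Fin r) ℝ := S * Mᵀ * A⁻¹ * R
  obtain ⟨x, hx⟩ : ∃ x : ℝ, ∀ i j, |X i j| ≤ x := by
    refine ⟨∑ i, ∑ j, |X i j|, fun i j => ?_⟩
    refine le_trans ?_ (Finset.single_le_sum (f := fun i => ∑ j, |X i j|)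
      (fun i _ => Finset.sum_nonneg fun j _ => abs_nonneg _) (Finset.mem_univ i))
    exact Finset.single_le_sum (f := fun j => |X i j|) (fun j _ => abs_nonneg _) (Finset.mem_univ j)
  refine ⟨A.det * ((r.factorial) * (1 + |x|) ^ r), ?_, fun s hs => ?_⟩
  · have := hA.det_pos
    have := r.factorial_pos
    positivity
  have e1 : A + s • (M * Mᵀ) = A + (R) * (s • (S * Mᵀ)) := by
    rw [Matrix.mul_smul, ← Matrix.mul_assoc R S, ← hS]
  rw [e1, det_add_mul _ _ hA.det_pos.ne'.isUnit, mul_assoc]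
  refine mul_le_mul_of_nonneg_left ?_ hA.det_pos.le
  have e2 : s • (S * Mᵀ) * A⁻¹ * R = s • X := by simp [X]
  rw [e2]
  have hent : ∀ i j, |(1 + s • X) i j| ≤ (1 + |x|) * s := by
    intro i j
    have h1 : |(1 : Matrix (Fin r) (Fin r) ℝ) i j| ≤ 1 := by
      rw [Matrix.one_apply]; split_ifs <;> simp
    have h2 : |(1 + s • X) i j| ≤ 1 + s * |X i j| := by
      refine (abs_add_le _ _).trans (add_le_add h1 ?_)
      rw [Matrix.smul_apply, smul_eq_mul, abs_mul, abs_of_nonneg (by linarith : 0 ≤ s)]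
    have h3 : s * |X i j| ≤ s * |x| :=
      mul_le_mul_of_nonneg_left ((hx i j).trans (le_abs_self x)) (by linarith)
    linarith
  have := Matrix.det_le (abv := AbsoluteValue.abs) (A := 1 + s • X) (x := (1 + |x|) * s) hent
  refine (le_abs_self _).trans (this.trans ?_)
  rw [Fintype.card_fin, nsmul_eq_mul, mul_pow, mul_assoc]

/-- `det (1 + s Q Qᵀ)` grows at least like `s` to the power `rank Q`. -/
theorem le_det_one_add_smul {p m : Type*} [Fintype p] [DecidableEq p] [Fintype m] [DecidableEq m]
    (Q : Matrix p m ℝ) (hQ : Function.Injective (mulVecLin Q)) :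
    ∃ C : ℝ, 0 < C ∧ ∀ s : ℝ, 0 < s →
      C * s ^ Fintype.card m ≤ (1 + s • (Q * Qᵀ)).det := by
  have hP : (Qᵀ * Q).PosDef := by
    have := Matrix.PosDef.conjTranspose_mul_self Q hQ
    rwa [conjTranspose_eq_transpose_of_trivial] at this
  refine ⟨_, hP.det_pos, fun s hs => ?_⟩
  rw [← Matrix.smul_mul, det_one_add_mul_comm, Matrix.mul_smul, mul_comm, ← det_smul, add_comm]
  exact det_add_psd_ge (hP.smul hs) Matrix.PosSemidef.one

/-- One term of the Cauchy–Binet formula bounds `det (M Λ Mᵀ)` from below. -/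
theorem le_det_mul_diagonal {p : ℕ} {Q : Type*} [Fintype Q] [DecidableEq Q]
    (M : Matrix (Fin p) Q ℝ) (lam : Q → ℝ) (hl : ∀ q, 0 < lam q) (g : Fin p → Q)
    (hg : (M.submatrix id g).det ≠ 0) :
    (M.submatrix id g).det ^ 2 * ∏ a, lam (g a) ≤ (M * diagonal lam * Mᵀ).det := by
  have hinj : Function.Injective g := by
    intro a b hab
    by_contra hne
    exact hg (Matrix.det_zero_of_column_eq hne fun i => by simp [hab])
  set G := M.submatrix id g
  have hP : (G * diagonal (fun a => lam (g a)) * Gᵀ).PosDef := by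
    have h1 : (diagonal (fun a => lam (g a))).PosDef := Matrix.PosDef.diagonal fun a => hl _
    have := h1.mul_mul_conjTranspose_same (B := G) (by
      rw [Matrix.vecMul_injective_iff_isUnit, Matrix.isUnit_iff_isUnit_det]
      exact hg.isUnit)
    rwa [conjTranspose_eq_transpose_of_trivial] at this
  have hC : (M * diagonal (fun q => if q ∈ Set.range g then 0 else lam q) * Mᵀ).PosSemidef := by
    classical
    have h1 : (diagonal (fun q => if q ∈ Set.range g then 0 else lam q)).PosSemidef :=
      Matrix.PosSemidef.diagonal fun q => by
        simp only [Pi.zero_apply]; split_ifs; exacts [le_rfl, (hl q).le]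
    have := h1.mul_mul_conjTranspose_same M
    rwa [conjTranspose_eq_transpose_of_trivial] at this
  have hsum : M * diagonal lam * Mᵀ = G * diagonal (fun a => lam (g a)) * Gᵀ +
      M * diagonal (fun q => if q ∈ Set.range g then 0 else lam q) * Mᵀ := by
    ext i j
    rw [Matrix.add_apply, Matrix.mul_apply, Matrix.mul_apply, Matrix.mul_apply]
    simp only [mul_diagonal, transpose_apply, G, submatrix_apply, id]
    have : ∑ a, M i (g a) * lam (g a) * M j (g a) =
        ∑ q, if q ∈ Set.range g then M i q * lam q * M j q else 0 := by
      rw [← Finset.sum_filter, ← Finset.sum_image (s := Finset.univ) (g := g)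
        (f := fun q => M i q * lam q * M j q) (hinj.injOn)]
      congr 1
      ext q; simp
    rw [this, ← Finset.sum_add_distrib]
    refine Finset.sum_congr rfl fun q _ => ?_
    split_ifs <;> simp
  rw [hsum]
  refine le_trans (le_of_eq ?_) (det_add_psd_ge hP hC)
  rw [det_mul, det_mul, det_transpose, det_diagonal]
  ring

/-! ### Greedy bases and summation by parts -/

/-- Summation by parts: a sum against antitone weights is nonpositive as soon as all initial partial
sums are nonpositive and the total vanishes. -/
theorem abel_nonpos {Q : Type*} [Fintype Q] {N : ℕ} (e : Fin N ≃ Q) (α w : Q → ℝ)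
    (hw : Antitone (w ∘ e)) (hA : ∀ m : ℕ, ∑ q with (e.symm q : ℕ) < m, α q ≤ 0)
    (h0 : ∑ q, α q = 0) : ∑ q, α q * w q ≤ 0 := by
  classical
  let a : ℕ → ℝ := fun i => if h : i < N then α (e ⟨i, h⟩) else 0
  let u : ℕ → ℝ := fun i => if h : i < N then w (e ⟨i, h⟩) else 0
  have hsum : ∀ m, m ≤ N → ∑ i ∈ Finset.range m, a i = ∑ q with (e.symm q : ℕ) < m, α q := by
    intro m hm
    refine Finset.sum_bij (fun i hi => e ⟨i, (Finset.mem_range.1 hi).trans_le hm⟩) ?_ ?_ ?_ ?_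
    · intro i hi; simpa using hi
    · intro i hi j hj h; simpa using h
    · intro q hq
      refine ⟨e.symm q, ?_, by simp⟩
      simpa using hq
    · intro i hi
      have : i < N := (Finset.mem_range.1 hi).trans_le hm
      simp [a, this]
  have h1 : ∑ q, α q * w q = ∑ i ∈ Finset.range N, u i • a i := by
    rw [Finset.sum_range, ← e.sum_comp]
    refine Finset.sum_congr rfl fun i _ => ?_
    simp [a, u, mul_comm]
  have h2 : ∑ i ∈ Finset.range N, a i = 0 := by
    rw [hsum N le_rfl, ← h0]
    refine Finset.sum_congr ?_ fun _ _ => rfl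
    ext q; simp
  rw [h1, Finset.sum_range_by_parts, h2, smul_zero, zero_sub, neg_nonpos]
  refine Finset.sum_nonneg fun i hi => ?_
  have hi' : i + 1 < N := by have := Finset.mem_range.1 hi; omega
  refine mul_nonneg_of_nonpos_of_nonpos ?_ ?_
  · have := hw (show (⟨i, by omega⟩ : Fin N) ≤ ⟨i + 1, hi'⟩ from Nat.le_succ i)
    simp only [u, hi', show i < N by omega, dite_true]
    simpa using this
  · rw [hsum _ hi'.le]; exact hA _

/-- The greedy choice of a basis: keeping each vector that is not in the span of its predecessors
yields, for every `m`, a basis of the span of the first `m` vectors. -/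
theorem greedy_aux {Q V : Type*} [AddCommGroup V] [Module ℝ V] (v : Q → V)
    (ρ : Q → ℕ) (hρ : Function.Injective ρ) (m : ℕ) :
    LinearIndepOn ℝ v {q | v q ∉ Submodule.span ℝ (v '' {q' | ρ q' < ρ q}) ∧ ρ q < m} ∧
    Submodule.span ℝ (v '' {q | v q ∉ Submodule.span ℝ (v '' {q' | ρ q' < ρ q}) ∧ ρ q < m}) =
      Submodule.span ℝ (v '' {q | ρ q < m}) := by
  induction m with
  | zero => simp
  | succ m ih =>
    obtain ⟨ih1, ih2⟩ := ih
    by_cases hq : ∃ q, ρ q = m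
    · obtain ⟨q, rfl⟩ := hq
      have e1 : {q' | ρ q' < ρ q + 1} = insert q {q' | ρ q' < ρ q} := by
        ext x
        simp only [Set.mem_ofPred_eq, Set.mem_insert_iff, Order.lt_add_one_iff, le_iff_lt_or_eq,
          hρ.eq_iff]
        tauto
      by_cases hI : v q ∈ Submodule.span ℝ (v '' {q' | ρ q' < ρ q})
      · have e2 : {x | v x ∉ Submodule.span ℝ (v '' {q' | ρ q' < ρ x}) ∧ ρ x < ρ q + 1} =
            {x | v x ∉ Submodule.span ℝ (v '' {q' | ρ q' < ρ x}) ∧ ρ x < ρ q} := by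
          ext x
          simp only [Set.mem_ofPred_eq, Order.lt_add_one_iff, le_iff_lt_or_eq, hρ.eq_iff]
          constructor
          · rintro ⟨h, h' | rfl⟩
            exacts [⟨h, h'⟩, absurd hI h]
          · tauto
        rw [e2, e1, Set.image_insert_eq, Submodule.span_insert_eq_span hI]
        exact ⟨ih1, ih2⟩
      · have e2 : {x | v x ∉ Submodule.span ℝ (v '' {q' | ρ q' < ρ x}) ∧ ρ x < ρ q + 1} =
            insert q {x | v x ∉ Submodule.span ℝ (v '' {q' | ρ q' < ρ x}) ∧ ρ x < ρ q} := by
          ext x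
          simp only [Set.mem_ofPred_eq, Order.lt_add_one_iff, le_iff_lt_or_eq, hρ.eq_iff,
            Set.mem_insert_iff]
          constructor
          · tauto
          · rintro (rfl | h)
            exacts [⟨hI, Or.inr rfl⟩, ⟨h.1, Or.inl h.2⟩]
        rw [e2, e1]
        refine ⟨ih1.insert (by rwa [ih2]), ?_⟩
        rw [Set.image_insert_eq, Set.image_insert_eq, Submodule.span_insert, Submodule.span_insert,
          ih2]
    · have hlt : ∀ x, ρ x < m + 1 ↔ ρ x < m := by
        intro x
        have : ρ x ≠ m := fun h => hq ⟨x, h⟩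
        omega
      simp only [hlt]
      exact ⟨ih1, ih2⟩

/-- The columns of a matrix of full row rank contain a basis which is maximal for a given
ordering: it meets every initial segment in as many columns as the rank of that segment. -/
theorem exists_greedy {p N : ℕ} {Q : Type*} [Fintype Q] [DecidableEq Q] (e : Fin N ≃ Q)
    (M : Matrix (Fin p) Q ℝ) (hM : Submodule.span ℝ (Set.range M.col) = ⊤) :
    ∃ g : Fin p → Q, (M.submatrix id g).det ≠ 0 ∧ ∀ m : ℕ,
      Module.finrank ℝ (Submodule.span ℝ (M.col '' {q | (e.symm q : ℕ) < m})) ≤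
        (Finset.univ.filter fun a => (e.symm (g a) : ℕ) < m).card := by
  classical
  let ρ : Q → ℕ := fun q => e.symm q
  have hρ : Function.Injective ρ := Fin.val_injective.comp e.symm.injective
  let I : ℕ → Finset Q := fun m => Finset.univ.filter fun q =>
    M.col q ∉ Submodule.span ℝ (M.col '' {q' | ρ q' < ρ q}) ∧ ρ q < m
  have hI : ∀ m, LinearIndepOn ℝ M.col (I m : Set Q) ∧
      Submodule.span ℝ (M.col '' (I m : Set Q)) =
        Submodule.span ℝ (M.col '' {q | ρ q < m}) := by
    intro m
    have := greedy_aux M.col ρ hρ m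
    simpa [I] using this
  have hcard : ∀ m, Module.finrank ℝ (Submodule.span ℝ (M.col '' {q | ρ q < m})) = (I m).card := by
    intro m
    rw [← (hI m).2, Set.image_eq_range, finrank_span_eq_card (hI m).1]
    simp
  have hall : {q | ρ q < N} = Set.univ := by ext q; simp [ρ]
  have hN : (I N).card = p := by
    rw [← hcard, hall, Set.image_univ, hM]; simp
  let g0 : Fin p ≃ I N := (Finset.equivFinOfCardEq hN).symm
  refine ⟨fun a => (g0 a : Q), ?_, fun m => ?_⟩
  · have hli : LinearIndependent ℝ (M.submatrix id fun a => (g0 a : Q)).col :=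
      (hI N).1.linearIndependent.comp g0 g0.injective
    rw [linearIndependent_cols_iff_isUnit, Matrix.isUnit_iff_isUnit_det] at hli
    exact hli.ne_zero
  · change Module.finrank ℝ (Submodule.span ℝ (M.col '' {q | ρ q < m})) ≤ _
    rw [hcard]
    refine le_trans (Finset.card_le_card (t := (Finset.univ.filter
      fun a => (e.symm (g0 a : Q) : ℕ) < m).image fun a => (g0 a : Q)) fun q hq => ?_)
      Finset.card_image_le
    simp only [I, Finset.mem_filter, Finset.mem_univ, true_and] at hq
    have hqN : q ∈ I N := by
      simp only [I, Finset.mem_filter, Finset.mem_univ, true_and]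
      exact ⟨hq.1, (e.symm q).2⟩
    rw [Finset.mem_image]
    exact ⟨g0.symm ⟨q, hqN⟩, by simpa [ρ] using hq.2, by simp⟩

/-! ### The local upper bound -/

/-- `(projMat n i)ᵀ` is the inclusion of `Eᵢ` in `E₀`. -/
theorem projMat_transpose_mulVec {k : ℕ} (n : Fin k → ℕ) (i : Fin k) (x : Fin (n i) → ℝ)
    (q : Idx n) : ((projMat n i)ᵀ *ᵥ x) q = if h : q.1 = i then x (h ▸ q.2) else 0 := by
  obtain ⟨i', a'⟩ := q
  simp only [mulVec, dotProduct, transpose_apply, projMat, of_apply]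
  by_cases h : i' = i
  · subst h
    simp
  · simp [h]

theorem projMat_mulVec {k : ℕ} (n : Fin k → ℕ) (i : Fin k) (x : Idx n → ℝ) :
    projMat n i *ᵥ x = proj n i x := by
  ext a
  simp [mulVec, dotProduct, projMat, proj]

theorem projMat_mulVec_transpose {k : ℕ} (n : Fin k → ℕ) (i : Fin k) (x : Fin (n i) → ℝ) :
    projMat n i *ᵥ ((projMat n i)ᵀ *ᵥ x) = x := by
  rw [projMat_mulVec]
  ext a
  simp [proj, projMat_transpose_mulVec]

/-- The columns of a block-diagonal matrix are the included columns of its blocks. -/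
theorem blockDiagonal'_col {k : ℕ} {n : Fin k → ℕ} {r : Fin k → ℕ}
    (U : ∀ i, Matrix (Fin (n i)) (Fin (r i)) ℝ) (q : Idx r) :
    (blockDiagonal' U).col q = (projMat n q.1)ᵀ *ᵥ ((U q.1).col q.2) := by
  obtain ⟨i, a⟩ := q
  ext ⟨i', a'⟩
  rw [projMat_transpose_mulVec]
  simp only [col_apply, blockDiagonal'_apply]
  by_cases h : i' = i
  · subst h; simp
  · simp [h]

theorem mul_col {p m r : Type*} [Fintype m] (A : Matrix p m ℝ) (D : Matrix m r ℝ) (q : r) :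
    (A * D).col q = A *ᵥ D.col q := by
  ext i; simp [Matrix.mul_apply, mulVec, dotProduct]

/-- A spectral form of the AJN functional is bounded above near any tuple `U₀` of invertible
matrices: the minors selected greedily at `U₀` stay away from `0` in a neighbourhood. -/
theorem local_bound {k l : ℕ} (n : Fin k → ℕ) (p : Fin l → ℕ)
    (c : Fin k → ℝ) (d : Fin l → ℝ) (B : ∀ j, Matrix (Fin (p j)) (Idx n) ℝ)
    (hd : ∀ j, 0 < d j)
    (hs : (∑ i, c i * (n i : ℝ)) = ∑ j, d j * (p j : ℝ))
    (hdim : ∀ T : Submodule ℝ (Idx n → ℝ), IsProductForm n T →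
        (∑ i, c i * (Module.finrank ℝ (T.map (Matrix.mulVecLin (projMat n i))) : ℝ)) ≤
          ∑ j, d j * (Module.finrank ℝ (T.map (Matrix.mulVecLin (B j))) : ℝ))
    (hc : ∀ i, 0 < c i)
    (hsurj : ∀ j, Function.Surjective (mulVecLin (B j)))
    (U₀ : ∀ i, Matrix (Fin (n i)) (Fin (n i)) ℝ) (hU₀ : ∀ i, IsUnit (U₀ i)) :
    ∃ C : ℝ, ∀ᶠ U in nhds U₀, ∀ lam : Idx n → ℝ, (∀ q, 0 < lam q) →
      ∑ q, c q.1 * Real.log (lam q) - ∑ j, d j * Real.log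
        ((B j * blockDiagonal' U) * diagonal lam * (B j * blockDiagonal' U)ᵀ).det ≤ C := by
  classical
  let D : (∀ i, Matrix (Fin (n i)) (Fin (n i)) ℝ) → ∀ j, (Fin (p j) → Idx n) → ℝ :=
    fun U j g => ((B j * blockDiagonal' U).submatrix id g).det
  have hDcont : ∀ j g, Continuous fun U => D U j g := by
    intro j g
    refine Continuous.matrix_det ?_
    refine Continuous.matrix_submatrix ?_ _ _
    refine continuous_const.matrix_mul ?_
    exact continuous_id.matrix_blockDiagonal'
  have hev : ∀ᶠ U in nhds U₀, ∀ j g, D U₀ j g ≠ 0 → |D U₀ j g| / 2 < |D U j g| := by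
    rw [Filter.eventually_all]; intro j
    rw [Filter.eventually_all]; intro g
    by_cases h : D U₀ j g = 0
    · simp [h]
    · have h1 : |D U₀ j g| / 2 < |D U₀ j g| := half_lt_self (abs_pos.2 h)
      filter_upwards [(hDcont j g).abs.continuousAt.eventually_const_lt h1] with U hU _ using hU
  refine ⟨∑ j, d j * ∑ g, |2 * Real.log (|D U₀ j g| / 2)|, ?_⟩
  filter_upwards [hev] with U hU lam hlam
  -- list the eigenvalues in decreasing order
  let N := Fintype.card (Idx n)
  let e₀ : Fin N ≃ Idx n := (Fintype.equivFin (Idx n)).symm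
  let σ := Tuple.sort fun i => -Real.log (lam (e₀ i))
  let e : Fin N ≃ Idx n := σ.trans e₀
  have he : Antitone ((fun q => Real.log (lam q)) ∘ e) := by
    intro i i' hii
    have := Tuple.monotone_sort (fun i => -Real.log (lam (e₀ i))) hii
    simpa [e, σ] using this
  have hbdU : IsUnit (blockDiagonal' U₀) := by
    obtain ⟨V, hV⟩ : ∃ V : ∀ i, Matrix (Fin (n i)) (Fin (n i)) ℝ, ∀ i, U₀ i * V i = 1 :=
      ⟨fun i => (U₀ i)⁻¹, fun i =>
        Matrix.mul_nonsing_inv _ ((Matrix.isUnit_iff_isUnit_det _).1 (hU₀ i))⟩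
    refine IsUnit.of_mul_eq_one (blockDiagonal' V) ?_
    rw [← blockDiagonal'_mul]
    simp_rw [hV]
    exact blockDiagonal'_one
  have hspan : ∀ j, Submodule.span ℝ (Set.range (B j * blockDiagonal' U₀).col) = ⊤ := by
    intro j
    rw [← Matrix.range_mulVecLin, Matrix.mulVecLin_mul, LinearMap.range_eq_top]
    exact (hsurj j).comp (Matrix.mulVec_surjective_iff_isUnit.2 hbdU)
  choose g hg0 hg using fun j => exists_greedy e (B j * blockDiagonal' U₀) (hspan j)
  have hlow : ∀ j, ∑ a, Real.log (lam (g j a)) - ∑ g, |2 * Real.log (|D U₀ j g| / 2)| ≤ Real.log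
        ((B j * blockDiagonal' U) * diagonal lam * (B j * blockDiagonal' U)ᵀ).det := by
    intro j
    have h1 : |D U₀ j (g j)| / 2 < |D U j (g j)| := hU j (g j) (hg0 j)
    have h0 : 0 < |D U₀ j (g j)| / 2 := half_pos (abs_pos.2 (hg0 j))
    have hne : D U j (g j) ≠ 0 := abs_pos.1 (h0.trans h1)
    have h2 := le_det_mul_diagonal (B j * blockDiagonal' U) lam hlam (g j) hne
    have hprod : 0 < ∏ a, lam (g j a) := Finset.prod_pos fun a _ => hlam _
    have h3 := Real.log_le_log (mul_pos (by positivity) hprod) h2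
    rw [Real.log_mul (by positivity) hprod.ne', Real.log_pow, Real.log_prod
      (fun a _ => (hlam _).ne')] at h3
    have h4 : Real.log (|D U₀ j (g j)| / 2) ≤ Real.log (D U j (g j)) := by
      rw [← Real.log_abs (D U j (g j))]
      exact Real.log_le_log h0 h1.le
    have h5 : |2 * Real.log (|D U₀ j (g j)| / 2)| ≤ ∑ g, |2 * Real.log (|D U₀ j g| / 2)| :=
      Finset.single_le_sum (f := fun g => |2 * Real.log (|D U₀ j g| / 2)|)
        (fun _ _ => abs_nonneg _) (Finset.mem_univ _)
    have h6 := neg_abs_le (2 * Real.log (|D U₀ j (g j)| / 2))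
    change ((2 : ℕ) : ℝ) * Real.log (D U j (g j)) + _ ≤ _ at h3
    push_cast at h3
    linarith
  -- summation by parts against the multiplicities of the greedy choices
  let α : Idx n → ℝ := fun q => c q.1 - ∑ j, d j * ∑ a, if g j a = q then 1 else 0
  have hα : ∀ F : Finset (Idx n), ∑ q ∈ F, α q =
      ∑ q ∈ F, c q.1 - ∑ j, d j * ((Finset.univ.filter fun a => g j a ∈ F).card : ℝ) := by
    intro F
    simp only [α, Finset.sum_sub_distrib]
    congr 1
    rw [Finset.sum_comm]
    refine Finset.sum_congr rfl fun j _ => ?_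
    rw [← Finset.mul_sum, Finset.sum_comm]
    congr 1
    rw [Finset.card_filter, Nat.cast_sum]
    refine Finset.sum_congr rfl fun a _ => ?_
    simp
  have key : ∑ q, α q * Real.log (lam q) ≤ 0 := by
    refine abel_nonpos e α _ he (fun m => ?_) ?_
    · rw [hα, sub_nonpos]
      let T' : ∀ i, Submodule ℝ (Fin (n i) → ℝ) := fun i =>
        Submodule.span ℝ ((U₀ i).col '' {a | (e.symm ⟨i, a⟩ : ℕ) < m})
      have h1 := hdim (⨆ i, (T' i).map (Matrix.mulVecLin (projMat n i)ᵀ)) ⟨T', rfl⟩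
      have h2 : ∑ q with (e.symm q : ℕ) < m, c q.1 =
          ∑ i, c i * ((Finset.univ.filter fun a => (e.symm ⟨i, a⟩ : ℕ) < m).card : ℝ) := by
        rw [Finset.sum_filter, Fintype.sum_sigma]
        refine Finset.sum_congr rfl fun i _ => ?_
        change (∑ a, if (e.symm ⟨i, a⟩ : ℕ) < m then c i else 0) = _
        rw [← Finset.sum_filter, Finset.sum_const, nsmul_eq_mul, mul_comm]
      rw [h2]
      refine le_trans (Finset.sum_le_sum fun i _ => ?_) (h1.trans (Finset.sum_le_sum fun j _ => ?_))
      · refine mul_le_mul_of_nonneg_left ?_ (hc i).le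
        rw [Nat.cast_le]
        have hli : LinearIndependent ℝ (U₀ i).col := linearIndependent_cols_iff_isUnit.2 (hU₀ i)
        have hf : Module.finrank ℝ (T' i) =
            (Finset.univ.filter fun a => (e.symm ⟨i, a⟩ : ℕ) < m).card := by
          change Module.finrank ℝ (Submodule.span ℝ ((U₀ i).col '' {a | (e.symm ⟨i, a⟩ : ℕ) < m})) = _
          have := hli.comp (Subtype.val : {a | (e.symm ⟨i, a⟩ : ℕ) < m} → Fin (n i))
            Subtype.val_injective
          rw [Set.image_eq_range]
          refine (finrank_span_eq_card this).trans ?_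
          rw [Fintype.card_subtype]
          simp
        rw [← hf]
        refine Submodule.finrank_mono fun x hx => ?_
        refine ⟨(projMat n i)ᵀ *ᵥ x, ?_, projMat_mulVec_transpose n i x⟩
        exact Submodule.mem_iSup_of_mem i ⟨x, hx, rfl⟩
      · refine mul_le_mul_of_nonneg_left ?_ (hd j).le
        rw [Nat.cast_le]
        refine le_trans ?_ ((hg j m).trans (le_of_eq (by simp)))
        refine Submodule.finrank_mono ?_
        rw [Submodule.map_iSup]
        refine iSup_le fun i => ?_
        simp only [T']
        rw [Submodule.map_span, Submodule.map_span]
        refine Submodule.span_mono ?_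
        rintro _ ⟨_, ⟨_, ⟨a, ha, rfl⟩, rfl⟩, rfl⟩
        refine ⟨⟨i, a⟩, ha, ?_⟩
        rw [mul_col, blockDiagonal'_col]
        rfl
    · rw [hα]
      simp [Fintype.sum_sigma, hs, mul_comm (n _ : ℝ)]
  have hexp : ∑ q, α q * Real.log (lam q) =
      ∑ q, c q.1 * Real.log (lam q) - ∑ j, d j * ∑ a, Real.log (lam (g j a)) := by
    simp only [α, sub_mul, Finset.sum_sub_distrib, Finset.sum_mul]
    congr 1
    rw [Finset.sum_comm]
    refine Finset.sum_congr rfl fun j _ => ?_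
    simp only [mul_assoc, ← Finset.mul_sum, Finset.sum_mul]
    rw [Finset.sum_comm]
    simp
  have hfin : ∑ j, d j * (∑ a, Real.log (lam (g j a)) - ∑ g, |2 * Real.log (|D U₀ j g| / 2)|) ≤
      ∑ j, d j * Real.log
        ((B j * blockDiagonal' U) * diagonal lam * (B j * blockDiagonal' U)ᵀ).det :=
    Finset.sum_le_sum fun j _ => mul_le_mul_of_nonneg_left (hlow j) (hd j).le
  simp only [mul_sub, Finset.sum_sub_distrib] at hfin
  linarith

/-! ### Boundedness of the log-determinant functional -/

theorem isCompact_orthogonal (m : ℕ) :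
    IsCompact {U : Matrix (Fin m) (Fin m) ℝ | U ∈ Matrix.unitaryGroup (Fin m) ℝ} := by
  refine IsCompact.of_isClosed_subset
    (isCompact_univ_pi fun _ : Fin m => isCompact_univ_pi fun _ : Fin m => isCompact_Icc (a := (-1 : ℝ)) (b := 1)) ?_ ?_
  · have : {U : Matrix (Fin m) (Fin m) ℝ | U ∈ Matrix.unitaryGroup (Fin m) ℝ} =
        {U | U * star U = 1} := by
      ext U; simp [Matrix.mem_unitaryGroup_iff]
    rw [this]
    exact isClosed_eq (continuous_id.mul continuous_star) continuous_const
  · intro U hU a _ b _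
    have := entry_norm_bound_of_unitary hU a b
    rw [Real.norm_eq_abs, abs_le] at this
    exact this

theorem posDef_spectral {m : ℕ} {K : Matrix (Fin m) (Fin m) ℝ} (hK : K.PosDef) :
    ∃ U ∈ Matrix.unitaryGroup (Fin m) ℝ, ∃ lam : Fin m → ℝ, (∀ a, 0 < lam a) ∧
      K = U * diagonal lam * Uᵀ ∧ Real.log K.det = ∑ a, Real.log (lam a) := by
  refine ⟨hK.1.eigenvectorUnitary, hK.1.eigenvectorUnitary.2, hK.1.eigenvalues,
    hK.eigenvalues_pos, ?_, ?_⟩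
  · have := hK.1.spectral_theorem
    rw [Unitary.conjStarAlgAut_apply] at this
    simpa [star_eq_conjTranspose, Function.comp_def] using this
  · rw [hK.1.det_eq_prod_eigenvalues, ← Real.log_prod fun a _ => (hK.eigenvalues_pos a).ne']
    simp

/-- Twice the AJN functional of independent centered Gaussians with covariances `Kᵢ`, up to an
additive constant. -/
noncomputable def detGap {k l : ℕ} (n : Fin k → ℕ) (p : Fin l → ℕ)
    (c : Fin k → ℝ) (d : Fin l → ℝ) (B : ∀ j, Matrix (Fin (p j)) (Idx n) ℝ)
    (K : ∀ i, Matrix (Fin (n i)) (Fin (n i)) ℝ) : ℝ :=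
  ∑ i, c i * Real.log (K i).det -
    ∑ j, d j * Real.log (B j * blockDiagonal' K * (B j)ᵀ).det

/-- The dimension condition for `T = E₀` together with the scaling condition forces
`dim (Bⱼ E₀) = pⱼ` for every `j`. -/
theorem surjective_of_conditions {k l : ℕ} (n : Fin k → ℕ) (p : Fin l → ℕ)
    (c : Fin k → ℝ) (d : Fin l → ℝ) (B : ∀ j, Matrix (Fin (p j)) (Idx n) ℝ)
    (hd : ∀ j, 0 < d j)
    (hs : (∑ i, c i * (n i : ℝ)) = ∑ j, d j * (p j : ℝ))
    (hdim : ∀ T : Submodule ℝ (Idx n → ℝ), IsProductForm n T →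
        (∑ i, c i * (Module.finrank ℝ (T.map (Matrix.mulVecLin (projMat n i))) : ℝ)) ≤
          ∑ j, d j * (Module.finrank ℝ (T.map (Matrix.mulVecLin (B j))) : ℝ))
    (j : Fin l) : Function.Surjective (mulVecLin (B j)) := by
  have h1 := hdim (⨆ i, (⊤ : Submodule ℝ (Fin (n i) → ℝ)).map (mulVecLin (projMat n i)ᵀ))
    ⟨fun _ => ⊤, rfl⟩
  set T := ⨆ i, (⊤ : Submodule ℝ (Fin (n i) → ℝ)).map (mulVecLin (projMat n i)ᵀ)
  have h2 : ∀ i, T.map (mulVecLin (projMat n i)) = ⊤ := by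
    intro i
    rw [eq_top_iff]
    intro x _
    exact ⟨(projMat n i)ᵀ *ᵥ x, Submodule.mem_iSup_of_mem i ⟨x, trivial, rfl⟩,
      projMat_mulVec_transpose n i x⟩
  have h2' : ∀ i, Module.finrank ℝ (T.map (mulVecLin (projMat n i))) = n i := fun i =>
    (LinearEquiv.ofEq _ _ (h2 i)).finrank_eq.trans (by simp)
  simp only [h2', hs] at h1
  have hle : ∀ j, Module.finrank ℝ (T.map (mulVecLin (B j))) ≤ p j := fun j =>
    (Submodule.finrank_le _).trans (by simp)
  have h3 : Module.finrank ℝ (T.map (mulVecLin (B j))) = p j := by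
    refine le_antisymm (hle j) ?_
    by_contra hlt
    push Not at hlt
    refine absurd h1 (not_le.2 (Finset.sum_lt_sum (fun j _ => ?_) ⟨j, Finset.mem_univ _, ?_⟩))
    · exact mul_le_mul_of_nonneg_left (by exact_mod_cast hle j) (hd j).le
    · exact mul_lt_mul_of_pos_left (by exact_mod_cast hlt) (hd j)
  rw [← LinearMap.range_eq_top, eq_top_iff,
    ← Submodule.eq_top_of_finrank_eq (S := T.map (mulVecLin (B j))) (by simpa using h3)]
  exact LinearMap.map_le_range

/-- Sufficiency: the local bounds of `local_bound` patch together over the compact product of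
orthogonal groups. -/
theorem detGap_bounded {k l : ℕ} (n : Fin k → ℕ) (p : Fin l → ℕ)
    (c : Fin k → ℝ) (d : Fin l → ℝ) (B : ∀ j, Matrix (Fin (p j)) (Idx n) ℝ)
    (hd : ∀ j, 0 < d j)
    (hs : (∑ i, c i * (n i : ℝ)) = ∑ j, d j * (p j : ℝ))
    (hdim : ∀ T : Submodule ℝ (Idx n → ℝ), IsProductForm n T →
        (∑ i, c i * (Module.finrank ℝ (T.map (Matrix.mulVecLin (projMat n i))) : ℝ)) ≤
          ∑ j, d j * (Module.finrank ℝ (T.map (Matrix.mulVecLin (B j))) : ℝ))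
    (hc : ∀ i, 0 < c i) :
    ∃ C : ℝ, ∀ K : ∀ i, Matrix (Fin (n i)) (Fin (n i)) ℝ, (∀ i, (K i).PosDef) →
      detGap n p c d B K ≤ C := by
  have hsurj := surjective_of_conditions n p c d B hd hs hdim
  have hcomp : IsCompact (Set.univ.pi fun i =>
      {U : Matrix (Fin (n i)) (Fin (n i)) ℝ | U ∈ Matrix.unitaryGroup (Fin (n i)) ℝ}) :=
    isCompact_univ_pi fun i => isCompact_orthogonal (n i)
  obtain ⟨C, hC⟩ : ∃ C : ℝ, ∀ U ∈ (Set.univ.pi fun i =>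
      {U : Matrix (Fin (n i)) (Fin (n i)) ℝ | U ∈ Matrix.unitaryGroup (Fin (n i)) ℝ}),
      ∀ lam : Idx n → ℝ, (∀ q, 0 < lam q) →
      ∑ q, c q.1 * Real.log (lam q) - ∑ j, d j * Real.log
        ((B j * blockDiagonal' U) * diagonal lam * (B j * blockDiagonal' U)ᵀ).det ≤ C := by
    refine hcomp.induction_on (p := fun S => ∃ C : ℝ, ∀ U ∈ S,
      ∀ lam : Idx n → ℝ, (∀ q, 0 < lam q) →
      ∑ q, c q.1 * Real.log (lam q) - ∑ j, d j * Real.log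
        ((B j * blockDiagonal' U) * diagonal lam * (B j * blockDiagonal' U)ᵀ).det ≤ C) ?_ ?_ ?_ ?_
    · exact ⟨0, by simp⟩
    · rintro S S' hSS ⟨C, hC⟩
      exact ⟨C, fun U hU => hC U (hSS hU)⟩
    · rintro S S' ⟨C, hC⟩ ⟨C', hC'⟩
      refine ⟨max C C', ?_⟩
      rintro U (hU | hU) lam hlam
      · exact (hC U hU lam hlam).trans (le_max_left _ _)
      · exact (hC' U hU lam hlam).trans (le_max_right _ _)
    · intro U₀ hU₀
      have hu : ∀ i, IsUnit (U₀ i) := fun i =>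
        IsUnit.of_mul_eq_one _ (Matrix.mem_unitaryGroup_iff.1 (hU₀ i trivial))
      obtain ⟨C, hC⟩ := local_bound n p c d B hd hs hdim hc hsurj U₀ hu
      exact ⟨_, mem_nhdsWithin_of_mem_nhds hC, C, fun U hU => hU⟩
  refine ⟨C, fun K hK => ?_⟩
  choose U hU lam hlam hKU hdet using fun i => posDef_spectral (hK i)
  have := hC U (fun i _ => hU i) (fun q => lam q.1 q.2) fun q => hlam _ _
  refine le_trans (le_of_eq ?_) this
  rw [detGap, Fintype.sum_sigma]
  congr 1
  · refine Finset.sum_congr rfl fun i _ => ?_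
    rw [hdet, Finset.mul_sum]
  · refine Finset.sum_congr rfl fun j _ => ?_
    have : blockDiagonal' K = blockDiagonal' U * diagonal (fun q : Idx n => lam q.1 q.2) *
        (blockDiagonal' U)ᵀ := by
      rw [blockDiagonal'_transpose, ← blockDiagonal'_diagonal, ← blockDiagonal'_mul,
        ← blockDiagonal'_mul]
      congr 1
      funext i; exact hKU i
    rw [this, transpose_mul]
    simp only [Matrix.mul_assoc]

/-- If `a log s ≤ C` for all `s ≥ 1`, then `a ≤ 0`. -/
theorem nonpos_of_log_bounded {a C : ℝ} (h : ∀ s : ℝ, 1 ≤ s → a * Real.log s ≤ C) : a ≤ 0 := by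
  by_contra ha
  push Not at ha
  have h1 := h (Real.exp ((|C| + 1) / a)) (Real.one_le_exp (by positivity))
  rw [Real.log_exp, mul_div_cancel₀ _ ha.ne'] at h1
  linarith [le_abs_self C]

theorem posDef_mul_mul_transpose {p m : Type*} [Fintype p] [Fintype m] [DecidableEq p]
    [DecidableEq m] {K : Matrix m m ℝ} (hK : K.PosDef) {B : Matrix p m ℝ}
    (hB : Function.Surjective (mulVecLin B)) : (B * K * Bᵀ).PosDef := by
  have := hK.mul_mul_conjTranspose_same (B := B) ?_
  · rwa [conjTranspose_eq_transpose_of_trivial] at this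
  intro x y hxy
  simp only at hxy
  refine dotProduct_eq _ _ fun z => ?_
  obtain ⟨w, rfl⟩ := hB z
  simp only [mulVecLin_apply, dotProduct_mulVec, hxy]

/-- Necessity of the scaling condition, by testing `Kᵢ = t • 1` for large and small `t`. -/
theorem scaling_of_bounded {k l : ℕ} (n : Fin k → ℕ) (p : Fin l → ℕ)
    (c : Fin k → ℝ) (d : Fin l → ℝ) (B : ∀ j, Matrix (Fin (p j)) (Idx n) ℝ)
    (hsurj : ∀ j, Function.Surjective (mulVecLin (B j))) {C : ℝ}
    (hC : ∀ K : ∀ i, Matrix (Fin (n i)) (Fin (n i)) ℝ, (∀ i, (K i).PosDef) →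
      detGap n p c d B K ≤ C) :
    (∑ i, c i * (n i : ℝ)) = ∑ j, d j * (p j : ℝ) := by
  have hBB : ∀ j, (B j * (B j)ᵀ).det ≠ 0 := fun j => by
    have := posDef_mul_mul_transpose Matrix.PosDef.one (hsurj j)
    rw [Matrix.mul_one] at this
    exact this.det_pos.ne'
  have key : ∀ t : ℝ, 0 < t → ((∑ i, c i * (n i : ℝ)) - ∑ j, d j * (p j : ℝ)) * Real.log t ≤
      C + ∑ j, d j * Real.log (B j * (B j)ᵀ).det := by
    intro t ht
    have h := hC (fun i => t • 1) fun i => Matrix.PosDef.one.smul ht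
    have e1 : blockDiagonal' (fun i => t • (1 : Matrix (Fin (n i)) (Fin (n i)) ℝ)) =
        t • (1 : Matrix (Idx n) (Idx n) ℝ) := by
      rw [← blockDiagonal'_one, ← blockDiagonal'_smul]; rfl
    rw [detGap, e1] at h
    have e2 : ∀ j, Real.log (B j * t • (1 : Matrix (Idx n) (Idx n) ℝ) * (B j)ᵀ).det =
        p j * Real.log t + Real.log (B j * (B j)ᵀ).det := by
      intro j
      rw [Matrix.mul_smul, Matrix.mul_one, Matrix.smul_mul, det_smul,
        Real.log_mul (by positivity) (hBB j), Real.log_pow, Fintype.card_fin]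
    simp only [e2, det_smul, det_one, mul_one, Real.log_pow, Fintype.card_fin, mul_add,
      Finset.sum_add_distrib, ← mul_assoc, ← Finset.sum_mul] at h
    rw [sub_mul]; linarith
  refine le_antisymm (sub_nonpos.1 (nonpos_of_log_bounded fun s hs => key s (by linarith))) ?_
  rw [← sub_nonpos]
  refine nonpos_of_log_bounded (C := C + ∑ j, d j * Real.log (B j * (B j)ᵀ).det) fun s hs => ?_
  have := key s⁻¹ (by positivity)
  rw [Real.log_inv] at this
  linarith

/-- Necessity of the dimension condition, by testing `Kᵢ = 1 + s Qᵢ Qᵢᵀ` as `s → ∞`, where the columns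
of `Qᵢ` are a basis of `Tᵢ`. -/
theorem dimension_of_bounded {k l : ℕ} (n : Fin k → ℕ) (p : Fin l → ℕ)
    (c : Fin k → ℝ) (d : Fin l → ℝ) (B : ∀ j, Matrix (Fin (p j)) (Idx n) ℝ)
    (hc : ∀ i, 0 < c i) (hd : ∀ j, 0 < d j)
    (hsurj : ∀ j, Function.Surjective (mulVecLin (B j))) {C : ℝ}
    (hC : ∀ K : ∀ i, Matrix (Fin (n i)) (Fin (n i)) ℝ, (∀ i, (K i).PosDef) →
      detGap n p c d B K ≤ C) (T : Submodule ℝ (Idx n → ℝ)) (hT : IsProductForm n T) :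
    (∑ i, c i * (Module.finrank ℝ (T.map (Matrix.mulVecLin (projMat n i))) : ℝ)) ≤
          ∑ j, d j * (Module.finrank ℝ (T.map (Matrix.mulVecLin (B j))) : ℝ) := by
  obtain ⟨T', rfl⟩ := hT
  set T := ⨆ i, (T' i).map (Matrix.mulVecLin (projMat n i)ᵀ)
  choose Q hQ hQi using fun i => exists_matrix_range (T' i)
  let Q0 := blockDiagonal' Q
  have hBB : ∀ j, (B j * (B j)ᵀ).PosDef := fun j => by
    simpa using posDef_mul_mul_transpose Matrix.PosDef.one (hsurj j)
  choose a ha hau using fun j => det_add_smul_le (hBB j) (B j * Q0)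
  choose b hb hbl using fun i => le_det_one_add_smul (Q i) (hQi i)
  have hproj : ∀ i, Module.finrank ℝ (T.map (Matrix.mulVecLin (projMat n i))) ≤
      Module.finrank ℝ (T' i) := by
    intro i
    refine Submodule.finrank_mono ?_
    rw [Submodule.map_iSup]
    refine iSup_le fun i' => ?_
    rintro _ ⟨_, ⟨x, hx, rfl⟩, rfl⟩
    by_cases h : i = i'
    · subst h
      simpa only [mulVecLin_apply, projMat_mulVec_transpose, SetLike.mem_coe] using hx
    · have : mulVecLin (projMat n i) (mulVecLin (projMat n i')ᵀ x) = 0 := by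
        rw [mulVecLin_apply, mulVecLin_apply, projMat_mulVec]
        ext y
        simp [proj, projMat_transpose_mulVec, h]
      rw [this]; exact zero_mem _
  have hB : ∀ j, Module.finrank ℝ (LinearMap.range (mulVecLin (B j * Q0))) ≤
      Module.finrank ℝ (T.map (Matrix.mulVecLin (B j))) := by
    intro j
    refine Submodule.finrank_mono ?_
    rw [Matrix.mulVecLin_mul, LinearMap.range_comp]
    refine Submodule.map_mono ?_
    rw [Matrix.range_mulVecLin, Submodule.span_le]
    rintro _ ⟨q, rfl⟩
    rw [blockDiagonal'_col]
    refine Submodule.mem_iSup_of_mem q.1 ⟨_, ?_, rfl⟩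
    exact (hQ q.1).le (by rw [Matrix.range_mulVecLin]; exact Submodule.subset_span ⟨_, rfl⟩)
  refine (Finset.sum_le_sum fun i _ => mul_le_mul_of_nonneg_left
    (Nat.cast_le.2 (hproj i)) (hc i).le).trans (le_trans ?_ (Finset.sum_le_sum fun j _ =>
      mul_le_mul_of_nonneg_left (Nat.cast_le.2 (hB j)) (hd j).le))
  rw [← sub_nonpos]
  refine nonpos_of_log_bounded
    (C := C - ∑ i, c i * Real.log (b i) + ∑ j, d j * Real.log (a j)) fun s hs => ?_
  have hs0 : 0 < s := by linarith
  have hpsd : ∀ i, (s • (Q i * (Q i)ᵀ)).PosSemidef := fun i => by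
    have := (Matrix.posSemidef_self_mul_conjTranspose (Q i)).smul hs0.le
    rwa [conjTranspose_eq_transpose_of_trivial] at this
  have hKpos : ∀ i, (1 + s • (Q i * (Q i)ᵀ)).PosDef := fun i =>
    Matrix.PosDef.one.add_posSemidef (hpsd i)
  have h := hC (fun i => 1 + s • (Q i * (Q i)ᵀ)) hKpos
  have e1 : blockDiagonal' (fun i => 1 + s • (Q i * (Q i)ᵀ)) = 1 + s • (Q0 * Q0ᵀ) := by
    rw [blockDiagonal'_transpose, ← blockDiagonal'_mul, ← blockDiagonal'_one,
      ← blockDiagonal'_smul, ← blockDiagonal'_add]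
    rfl
  have h1 : ∀ i, Real.log (b i) + Module.finrank ℝ (T' i) * Real.log s ≤
      Real.log (1 + s • (Q i * (Q i)ᵀ)).det := by
    intro i
    have := Real.log_le_log (mul_pos (hb i) (pow_pos hs0 _)) (hbl i s hs0)
    rwa [Real.log_mul (hb i).ne' (pow_pos hs0 _).ne', Real.log_pow, Fintype.card_fin] at this
  have hQ0 : (1 + s • (Q0 * Q0ᵀ)).PosDef := by
    refine Matrix.PosDef.one.add_posSemidef ?_
    have := (Matrix.posSemidef_self_mul_conjTranspose Q0).smul hs0.le
    rwa [conjTranspose_eq_transpose_of_trivial] at this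
  have h2 : ∀ j, Real.log (B j * (1 + s • (Q0 * Q0ᵀ)) * (B j)ᵀ).det ≤
      Real.log (a j) +
        Module.finrank ℝ (LinearMap.range (mulVecLin (B j * Q0))) * Real.log s := by
    intro j
    have e2 : B j * (1 + s • (Q0 * Q0ᵀ)) * (B j)ᵀ =
        B j * (B j)ᵀ + s • ((B j * Q0) * (B j * Q0)ᵀ) := by
      rw [Matrix.mul_add, Matrix.mul_one, Matrix.add_mul, Matrix.mul_smul, Matrix.smul_mul,
        transpose_mul]
      simp only [Matrix.mul_assoc]
    have hpos := posDef_mul_mul_transpose hQ0 (hsurj j)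
    have := Real.log_le_log hpos.det_pos ((congrArg det e2).le.trans (hau j s hs))
    rwa [Real.log_mul (ha j).ne' (pow_pos hs0 _).ne', Real.log_pow] at this
  rw [detGap, e1] at h
  have h3 := Finset.sum_le_sum fun i (_ : i ∈ Finset.univ) =>
    mul_le_mul_of_nonneg_left (h1 i) (hc i).le
  have h4 := Finset.sum_le_sum fun j (_ : j ∈ Finset.univ) =>
    mul_le_mul_of_nonneg_left (h2 j) (hd j).le
  simp only [mul_add, Finset.sum_add_distrib, ← mul_assoc, ← Finset.sum_mul] at h3 h4
  rw [sub_mul]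
  linarith

/-! ### Gaussian measures as images of the standard Gaussian -/

/-- The standard Gaussian measure on `ι → ℝ`, as a product measure. -/
noncomputable def stdG (ι : Type*) [Fintype ι] : Measure (ι → ℝ) :=
  Measure.pi fun _ => gaussianReal 0 1

instance (ι : Type*) [Fintype ι] : IsProbabilityMeasure (stdG ι) := by
  unfold stdG; infer_instance

theorem stdG_eq_withDensity (ι : Type*) [Fintype ι] :
    stdG ι = volume.withDensity fun x => ENNReal.ofReal (∏ i, gaussianPDFReal 0 1 (x i)) := by
  refine Measure.pi_eq fun s hs => ?_
  rw [withDensity_apply _ (MeasurableSet.univ_pi hs), volume_pi, Measure.restrict_pi_pi,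
    ← ofReal_integral_eq_lintegral_ofReal]
  · rw [integral_fintype_prod_eq_prod (μ := fun i => volume.restrict (s i)) fun _ x => gaussianPDFReal 0 1 x, ENNReal.ofReal_prod_of_nonneg]
    · refine Finset.prod_congr rfl fun i _ => ?_
      rw [gaussianReal_apply_eq_integral _ one_ne_zero]
    · exact fun i _ => integral_nonneg fun x => gaussianPDFReal_nonneg _ _ _
  · exact Integrable.fintype_prod_dep fun i => (integrable_gaussianPDFReal 0 1).restrict
  · exact Filter.Eventually.of_forall fun x => Finset.prod_nonneg fun i _ => gaussianPDFReal_nonneg _ _ _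

theorem prod_gaussianPDFReal {ι : Type*} [Fintype ι] (x : ι → ℝ) :
    ∏ i, gaussianPDFReal 0 1 (x i) =
      √(((2 * π) ^ Fintype.card ι)⁻¹) * Real.exp (-(x ⬝ᵥ x) / 2) := by
  simp only [gaussianPDFReal, NNReal.coe_one, mul_one, sub_zero, Finset.prod_mul_distrib,
    Finset.prod_const, Finset.card_univ, ← Real.exp_sum]
  congr 1
  · rw [Real.sqrt_inv, inv_pow, Real.sqrt_eq_rpow, Real.sqrt_eq_rpow, ← Real.rpow_natCast,
      ← Real.rpow_natCast, ← Real.rpow_mul (by positivity), ← Real.rpow_mul (by positivity),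
      mul_comm (1 / 2 : ℝ)]
  · rw [← Finset.sum_div, Finset.sum_neg_distrib]
    simp only [dotProduct, sq]

/-- The quadratic form `(A Aᵀ)⁻¹` pulls back under `A` to the standard one. -/
theorem quad_comp {ι : Type*} [Fintype ι] [DecidableEq ι] {A : Matrix ι ι ℝ} (hA : A.det ≠ 0)
    (x : ι → ℝ) : (A *ᵥ x) ⬝ᵥ (A * Aᵀ)⁻¹ *ᵥ (A *ᵥ x) = x ⬝ᵥ x := by
  have hu : IsUnit A.det := hA.isUnit
  have : Aᵀ * ((A * Aᵀ)⁻¹ * A) = 1 := by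
    rw [Matrix.mul_inv_rev, Matrix.mul_assoc, Matrix.nonsing_inv_mul _ hu, Matrix.mul_one,
      Matrix.mul_nonsing_inv _ (by rwa [det_transpose])]
  rw [mulVec_mulVec, dotProduct_mulVec, vecMul_mulVec, ← dotProduct_mulVec, this, one_mulVec]

/-- A Gaussian with covariance `A Aᵀ` is the image of the standard Gaussian under `x ↦ m + A x`, by
linear change of variables. -/
theorem gaussianM_eq_map {ι : Type*} [Fintype ι] [DecidableEq ι] (m : ι → ℝ)
    {A : Matrix ι ι ℝ} (hA : A.det ≠ 0) :
    gaussianM m (A * Aᵀ) = (stdG ι).map fun x => m + A *ᵥ x := by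
  have hf : Measurable fun x : ι → ℝ => m + A *ᵥ x := by fun_prop
  have hG : Measurable fun x : ι → ℝ => 
    ENNReal.ofReal (Real.sqrt (((2 * π) ^ Fintype.card ι * (A * Aᵀ).det)⁻¹) *
      Real.exp (-((x - m) ⬝ᵥ ((A * Aᵀ)⁻¹).mulVec (x - m)) / 2)) := by
    refine ENNReal.measurable_ofReal.comp (Continuous.measurable ?_)
    simp only [dotProduct, Matrix.mulVec]
    fun_prop
  have hvol : (volume : Measure (ι → ℝ)) =
      ENNReal.ofReal |A.det| • (volume : Measure (ι → ℝ)).map fun x => m + A *ᵥ x := by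
    have h1 : (volume : Measure (ι → ℝ)).map (fun x => m + A *ᵥ x) =
        ((volume : Measure (ι → ℝ)).map (toLin' A)).map (m + ·) := by
      rw [Measure.map_map (by fun_prop) (by fun_prop)]; rfl
    rw [h1, Real.map_matrix_volume_pi_eq_smul_volume_pi hA, Measure.map_smul,
      map_add_left_eq_self, smul_smul, ← ENNReal.ofReal_mul (abs_nonneg _), abs_inv,
      mul_inv_cancel₀ (abs_pos.2 hA).ne', ENNReal.ofReal_one, one_smul]
  ext s hs
  rw [Measure.map_apply hf hs, stdG_eq_withDensity, withDensity_apply _ (hf hs), gaussianM,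
    withDensity_apply _ hs]
  conv_lhs => rw [hvol]
  rw [Measure.restrict_smul, lintegral_smul_measure, Measure.restrict_map hf hs,
    lintegral_map hG hf, smul_eq_mul, ← lintegral_const_mul' _ _ ENNReal.ofReal_ne_top]
  refine lintegral_congr fun x => ?_
  rw [← ENNReal.ofReal_mul (abs_nonneg _), add_sub_cancel_left, quad_comp hA,
    prod_gaussianPDFReal, ← mul_assoc]
  congr 2
  rw [det_mul, det_transpose, mul_inv, Real.sqrt_mul (by positivity), Real.sqrt_inv (A.det * A.det),
    Real.sqrt_mul_self_eq_abs]
  field_simp [abs_pos.2 hA]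

theorem charFunDual_stdG_map {ι κ : Type*} [Fintype ι] [DecidableEq ι] [Fintype κ] [DecidableEq κ]
    (A : Matrix κ ι ℝ) (L : StrongDual ℝ (κ → ℝ)) :
    charFunDual ((stdG ι).map fun x => A *ᵥ x) L =
      Complex.exp (-((fun j => L (Pi.single j 1)) ⬝ᵥ (A * Aᵀ) *ᵥ fun j => L (Pi.single j 1) : ℝ) / 2) := by
  have e : (fun x : ι → ℝ => A *ᵥ x) = (LinearMap.toContinuousLinearMap (mulVecLin A)) := rfl
  rw [e, charFunDual_map, stdG, charFunDual_pi]
  set v : κ → ℝ := fun j => L (Pi.single j 1)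
  have hL : ∀ y : κ → ℝ, L y = v ⬝ᵥ y := by
    intro y
    conv_lhs => rw [pi_eq_sum_univ' y, map_sum]
    refine Finset.sum_congr rfl fun j _ => ?_
    rw [map_smul, smul_eq_mul, mul_comm]
  have h1 : ∀ i, charFunDual (gaussianReal 0 1)
      ((L.comp (LinearMap.toContinuousLinearMap (mulVecLin A))).comp
        (ContinuousLinearMap.single ℝ (fun _ : ι => ℝ) i)) =
      Complex.exp (-(((v ᵥ* A) i * (v ᵥ* A) i : ℝ) : ℂ) / 2) := by
    intro i
    have h2 := charFun_gaussianReal (μ := 0) (v := 1) ((v ᵥ* A) i)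
    rw [charFun_apply_real] at h2
    rw [charFunDual_apply]
    have h3 : ∀ x : ℝ, ((L.comp (LinearMap.toContinuousLinearMap (mulVecLin A))).comp
        (ContinuousLinearMap.single ℝ (fun _ : ι => ℝ) i)) x = (v ᵥ* A) i * x := by
      intro x
      have : ((L.comp (LinearMap.toContinuousLinearMap (mulVecLin A))).comp
        (ContinuousLinearMap.single ℝ (fun _ : ι => ℝ) i)) x = L (A *ᵥ Pi.single i x) := rfl
      rw [this, hL, dotProduct_mulVec, dotProduct_single]
    simp only [h3]
    push_cast
    rw [h2]
    congr 1
    push_cast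
    ring
  rw [Finset.prod_congr rfl fun i _ => h1 i, ← Complex.exp_sum]
  congr 1
  rw [← Finset.sum_div, Finset.sum_neg_distrib, ← Complex.ofReal_sum]
  congr 3
  rw [← mulVec_mulVec, dotProduct_mulVec, mulVec_transpose]
  rfl

/-- The law of `A x`, for `x` standard Gaussian, depends on `A` only through the covariance
`A Aᵀ`; the number of columns is irrelevant. -/
theorem stdG_map_congr {ι ι' κ : Type*} [Fintype ι] [DecidableEq ι] [Fintype ι'] [DecidableEq ι']
    [Fintype κ] [DecidableEq κ]
    {A : Matrix κ ι ℝ} {A' : Matrix κ ι' ℝ} (h : A * Aᵀ = A' * A'ᵀ) :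
    ((stdG ι).map fun x => A *ᵥ x) = (stdG ι').map fun x => A' *ᵥ x := by
  have : IsProbabilityMeasure ((stdG ι).map fun x => A *ᵥ x) :=
    Measure.isProbabilityMeasure_map (by fun_prop)
  have : IsProbabilityMeasure ((stdG ι').map fun x => A' *ᵥ x) :=
    Measure.isProbabilityMeasure_map (by fun_prop)
  refine Measure.ext_of_charFunDual (funext fun L => ?_)
  rw [charFunDual_stdG_map, charFunDual_stdG_map, h]

theorem exists_sqrt {m : ℕ} {K : Matrix (Fin m) (Fin m) ℝ} (hK : K.PosDef) :
    ∃ A : Matrix (Fin m) (Fin m) ℝ, A.det ≠ 0 ∧ K = A * Aᵀ := by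
  obtain ⟨U, -, lam, hlam, hKU, -⟩ := posDef_spectral hK
  have : K = (U * diagonal fun a => √(lam a)) * (U * diagonal fun a => √(lam a))ᵀ := by
    rw [hKU, transpose_mul, diagonal_transpose, Matrix.mul_assoc, Matrix.mul_assoc,
      ← Matrix.mul_assoc (diagonal _) (diagonal _), diagonal_mul_diagonal]
    simp only [Real.mul_self_sqrt (hlam _).le]
  refine ⟨_, fun h0 => ?_, this⟩
  have h1 := hK.det_pos
  rw [this, det_mul, h0, zero_mul] at h1
  exact lt_irrefl _ h1

/-! ### Entropy and independence of Gaussians -/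

theorem integrable_sq_stdG {ι : Type*} [Fintype ι] (i : ι) :
    Integrable (fun x => x i * x i) (stdG ι) := by
  have h : Integrable (fun y : ℝ => y * y) (gaussianReal 0 1) := by
    simpa only [id, sq] using (memLp_id_gaussianReal (μ := 0) (v := 1) 2).integrable_sq
  exact integrable_comp_eval (μ := fun _ : ι => gaussianReal 0 1) h

theorem integral_sq_stdG {ι : Type*} [Fintype ι] (i : ι) :
    ∫ x, x i * x i ∂(stdG ι) = 1 := by
  have h : ∫ y : ℝ, y * y ∂(gaussianReal 0 1) = 1 := by
    have := variance_eq_sub (memLp_id_gaussianReal (μ := 0) (v := 1) 2)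
    simp [variance_id_gaussianReal, integral_id_gaussianReal, sq] at this
    exact this.symm
  rw [← h]
  exact integral_comp_eval (μ := fun _ : ι => gaussianReal 0 1) (f := fun y : ℝ => y * y)
    (by fun_prop)

theorem ent_gaussianM {ι : Type*} [Fintype ι] [DecidableEq ι] (m : ι → ℝ)
    {A : Matrix ι ι ℝ} (hA : A.det ≠ 0) :
    ent (gaussianM m (A * Aᵀ)) =
      (((Fintype.card ι * (1 + Real.log (2 * π)) + Real.log (A * Aᵀ).det) / 2 : ℝ) : EReal) := by
  set K := A * Aᵀ with hK
  have hKdet : 0 < K.det := by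
    rw [hK, det_mul, det_transpose]; exact mul_self_pos.2 hA
  have hf : Measurable fun x : ι → ℝ => m + A *ᵥ x := by fun_prop
  let G : (ι → ℝ) → ℝ := fun x => Real.sqrt (((2 * π) ^ Fintype.card ι * K.det)⁻¹) *
      Real.exp (-((x - m) ⬝ᵥ (K⁻¹).mulVec (x - m)) / 2)
  have hGm : Measurable fun x => ENNReal.ofReal (G x) := by
    refine ENNReal.measurable_ofReal.comp (Continuous.measurable ?_)
    simp only [G, dotProduct, Matrix.mulVec]
    fun_prop
  have hac : gaussianM m K ≪ volume := withDensity_absolutelyContinuous _ _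
  let q : (ι → ℝ) → ℝ := fun x =>
    -(Fintype.card ι * Real.log (2 * π) + Real.log K.det) / 2 -
      ((x - m) ⬝ᵥ (K⁻¹).mulVec (x - m)) / 2
  have hqm : Measurable q := by
    refine Continuous.measurable ?_
    simp only [q, dotProduct, Matrix.mulVec]
    fun_prop
  have hae : (fun x => Real.log (((gaussianM m K).rnDeriv volume x).toReal))
      =ᵐ[gaussianM m K] q := by
    refine hac.ae_eq ?_
    filter_upwards [Measure.rnDeriv_withDensity volume hGm] with x hx
    have hx' : (gaussianM m K).rnDeriv volume x = ENNReal.ofReal (G x) := hx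
    have hG0 : 0 ≤ G x := by positivity
    rw [hx', ENNReal.toReal_ofReal hG0, Real.log_mul (by positivity) (Real.exp_ne_zero _),
      Real.log_exp, Real.log_sqrt (by positivity), Real.log_inv,
      Real.log_mul (by positivity) hKdet.ne', Real.log_pow]
    simp only [q]; ring
  have hmap : gaussianM m K = (stdG ι).map fun x => m + A *ᵥ x := gaussianM_eq_map m hA
  have hq : ∀ x, q (m + A *ᵥ x) =
      -(Fintype.card ι * Real.log (2 * π) + Real.log K.det) / 2 - (∑ i, x i * x i) / 2 := by
    intro x
    simp only [q, add_sub_cancel_left, hK, quad_comp hA]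
    rfl
  have hsum : Integrable (fun x : ι → ℝ => ∑ i, x i * x i) (stdG ι) :=
    integrable_finsetSum _ fun i _ => integrable_sq_stdG i
  have hint : Integrable q (gaussianM m K) := by
    rw [hmap, integrable_map_measure hqm.aestronglyMeasurable hf.aemeasurable]
    refine Integrable.congr ((integrable_const _).sub (hsum.div_const 2))
      (Filter.Eventually.of_forall fun x => (hq x).symm)
  have hval : ∫ x, q x ∂(gaussianM m K) =
      -(Fintype.card ι * Real.log (2 * π) + Real.log K.det) / 2 - Fintype.card ι / 2 := by
    rw [hmap, integral_map hf.aemeasurable hqm.aestronglyMeasurable]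
    simp only [hq]
    have h2 : ∫ x, (∑ i, x i * x i) / 2 ∂(stdG ι) = Fintype.card ι / 2 := by
      rw [integral_div, integral_finsetSum _ fun i _ => integrable_sq_stdG i]
      simp [integral_sq_stdG]
    rw [integral_sub (integrable_const _) (hsum.div_const 2), h2]
    simp
  rw [ent, if_pos ⟨hac, hint.congr hae.symm⟩, integral_congr_ae hae, hval]
  congr 1
  ring

/-- If `B` is not surjective, the law of `B X` lives on a proper subspace, so it is singular and its
entropy is `⊥`. -/
theorem ent_map_eq_bot {ι : Type*} [Fintype ι] {p : ℕ} {μ : Measure (ι → ℝ)}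
    [IsProbabilityMeasure μ] {B : Matrix (Fin p) ι ℝ}
    (hB : ¬ Function.Surjective (mulVecLin B)) : ent (μ.map B.mulVec) = ⊥ := by
  have hBm : Measurable B.mulVec := by
    change Measurable fun x => B *ᵥ x
    fun_prop
  rw [ent, if_neg]
  rintro ⟨hac, -⟩
  have h0 : (volume : Measure (Fin p → ℝ)) (LinearMap.range (mulVecLin B)) = 0 :=
    Measure.addHaar_submodule _ _ fun h => hB (LinearMap.range_eq_top.1 h)
  have h1 := hac h0
  have h2 : B.mulVec ⁻¹' (LinearMap.range (mulVecLin B)) = Set.univ :=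
    Set.eq_univ_of_forall fun x => LinearMap.mem_range_self (mulVecLin B) x
  rw [Measure.map_apply hBm (Submodule.closed_of_finiteDimensional _).measurableSet, h2,
    measure_univ] at h1
  exact one_ne_zero h1

/-- Independent Gaussians are jointly an affine image of one standard Gaussian on `E₀`. -/
theorem jointM_gaussianM {k : ℕ} (n : Fin k → ℕ) (m : ∀ i, Fin (n i) → ℝ)
    {A : ∀ i, Matrix (Fin (n i)) (Fin (n i)) ℝ} (hA : ∀ i, (A i).det ≠ 0) :
    jointM n (fun i => gaussianM (m i) (A i * (A i)ᵀ)) =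
      (stdG (Idx n)).map fun x => (fun q : Idx n => m q.1 q.2) + blockDiagonal' A *ᵥ x := by
  have hpi : Measure.pi (fun i => stdG (Fin (n i))) =
      (stdG (Idx n)).map fun x i a => x ⟨i, a⟩ := by
    have := Measure.infinitePi_map_piCurry (X := fun (i : Fin k) (_ : Fin (n i)) => ℝ) (fun _ _ => gaussianReal 0 1)
    simp only [Measure.infinitePi_eq_pi] at this
    exact this.symm
  have hm : ∀ i, Measurable fun x : Fin (n i) → ℝ => m i + A i *ᵥ x := fun i => by fun_prop
  have hp : ∀ i, IsProbabilityMeasure ((stdG (Fin (n i))).map fun x => m i + A i *ᵥ x) := fun i =>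
    Measure.isProbabilityMeasure_map (hm i).aemeasurable
  simp only [jointM, gaussianM_eq_map _ (hA _)]
  rw [← Measure.pi_map_pi (f := fun i x => m i + A i *ᵥ x) fun i => (hm i).aemeasurable, hpi, Measure.map_map (by fun_prop) (by fun_prop),
    Measure.map_map (by fun_prop) (by fun_prop)]
  congr 1
  funext x ⟨i, a⟩
  simp only [Function.comp_apply, Pi.add_apply]
  congr 1
  simp [mulVec, dotProduct, Fintype.sum_sigma, blockDiagonal'_apply]

theorem jointM_map_proj {k : ℕ} (n : Fin k → ℕ) (μ : ∀ i, Measure (Fin (n i) → ℝ))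
    [∀ i, IsProbabilityMeasure (μ i)] (i : Fin k) : (jointM n μ).map (proj n i) = μ i := by
  have h : Measurable (proj n i) := by unfold proj; fun_prop
  rw [jointM, Measure.map_map h (by fun_prop)]
  have : (proj n i ∘ fun (f : ∀ i, Fin (n i) → ℝ) (q : Idx n) => f q.1 q.2) = Function.eval i := rfl
  rw [this, Measure.pi_map_eval]
  simp

/-! ### The AJN functional on Gaussians -/

theorem ent_gaussianM_fin {m : ℕ} (v : Fin m → ℝ) {K : Matrix (Fin m) (Fin m) ℝ} (hK : K.PosDef) :
    ent (gaussianM v K) = (((m * (1 + Real.log (2 * π)) + Real.log K.det) / 2 : ℝ) : EReal) := by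
  obtain ⟨A, hA, rfl⟩ := exists_sqrt hK
  rw [ent_gaussianM v hA, Fintype.card_fin]

theorem isProbabilityMeasure_gaussianM {m : ℕ} (v : Fin m → ℝ) {K : Matrix (Fin m) (Fin m) ℝ}
    (hK : K.PosDef) : IsProbabilityMeasure (gaussianM v K) := by
  obtain ⟨A, hA, rfl⟩ := exists_sqrt hK
  rw [gaussianM_eq_map v hA]
  exact Measure.isProbabilityMeasure_map (by fun_prop)

theorem isProbabilityMeasure_jointM {k : ℕ} (n : Fin k → ℕ) (μ : ∀ i, Measure (Fin (n i) → ℝ))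
    [∀ i, IsProbabilityMeasure (μ i)] : IsProbabilityMeasure (jointM n μ) := by
  have h : Measurable fun (f : ∀ i, Fin (n i) → ℝ) (q : Idx n) => f q.1 q.2 := by fun_prop
  exact Measure.isProbabilityMeasure_map h.aemeasurable

/-- A block-diagonal matrix with positive definite blocks is positive definite. -/
theorem posDef_blockDiagonal' {k : ℕ} {n : Fin k → ℕ}
    {K : ∀ i, Matrix (Fin (n i)) (Fin (n i)) ℝ} (hK : ∀ i, (K i).PosDef) :
    (blockDiagonal' K).PosDef := by
  choose A hA hKA using fun i => exists_sqrt (hK i)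
  obtain rfl : K = fun i => A i * (A i)ᵀ := funext hKA
  rw [blockDiagonal'_mul, ← blockDiagonal'_transpose]
  have hu : IsUnit (blockDiagonal' A) := by
    refine IsUnit.of_mul_eq_one (blockDiagonal' fun i => (A i)⁻¹) ?_
    rw [← blockDiagonal'_mul, ← blockDiagonal'_one]
    congr 1
    exact funext fun i => mul_nonsing_inv _ (hA i).isUnit
  have := Matrix.PosDef.mul_conjTranspose_self (blockDiagonal' A) (vecMul_injective_of_isUnit hu)
  rwa [conjTranspose_eq_transpose_of_trivial] at this

/-- A surjective linear image of a product of Gaussians is Gaussian, with covariance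
`B diag(K₁, …, K_k) Bᵀ`. -/
theorem jointM_gaussianM_map {k : ℕ} (n : Fin k → ℕ) (m : ∀ i, Fin (n i) → ℝ)
    {K : ∀ i, Matrix (Fin (n i)) (Fin (n i)) ℝ} (hK : ∀ i, (K i).PosDef) {p : ℕ}
    {B : Matrix (Fin p) (Idx n) ℝ} (hB : Function.Surjective (mulVecLin B)) :
    (jointM n (fun i => gaussianM (m i) (K i))).map B.mulVec =
      gaussianM (B *ᵥ fun q : Idx n => m q.1 q.2) (B * blockDiagonal' K * Bᵀ) := by
  have hpd : (B * blockDiagonal' K * Bᵀ).PosDef :=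
    posDef_mul_mul_transpose (posDef_blockDiagonal' hK) hB
  obtain ⟨A', hA', hKA'⟩ := exists_sqrt hpd
  choose A hA hKA using fun i => exists_sqrt (hK i)
  obtain rfl : K = fun i => A i * (A i)ᵀ := funext hKA
  have hBm : Measurable B.mulVec := by
    change Measurable fun x => B *ᵥ x
    fun_prop
  have hcov : (B * blockDiagonal' A) * (B * blockDiagonal' A)ᵀ = A' * A'ᵀ := by
    rw [← hKA', transpose_mul, blockDiagonal'_transpose, blockDiagonal'_mul]
    simp only [Matrix.mul_assoc]
  rw [hKA', gaussianM_eq_map _ hA', jointM_gaussianM n m hA, Measure.map_map hBm (by fun_prop)]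
  have e1 : (B.mulVec ∘ fun x => (fun q : Idx n => m q.1 q.2) + blockDiagonal' A *ᵥ x) =
      (fun y => (B *ᵥ fun q : Idx n => m q.1 q.2) + y) ∘ fun x => (B * blockDiagonal' A) *ᵥ x := by
    funext x
    simp only [Function.comp_apply, mulVec_add, mulVec_mulVec]
  have e2 : (fun x => (B *ᵥ fun q : Idx n => m q.1 q.2) + A' *ᵥ x) =
      (fun y => (B *ᵥ fun q : Idx n => m q.1 q.2) + y) ∘ fun x => A' *ᵥ x := rfl
  rw [e1, e2, ← Measure.map_map (by fun_prop) (by fun_prop),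
    ← Measure.map_map (by fun_prop) (by fun_prop), stdG_map_congr hcov]

/-- The part of the AJN functional of independent Gaussians that does not depend on the
covariances. -/
noncomputable def gapConst {k l : ℕ} (n : Fin k → ℕ) (p : Fin l → ℕ)
    (c : Fin k → ℝ) (d : Fin l → ℝ) : ℝ :=
  (∑ i, c i * (n i : ℝ) - ∑ j, d j * (p j : ℝ)) * (1 + Real.log (2 * π)) / 2

theorem sum_coe_mul_coe {ι : Type*} [Fintype ι] (f g : ι → ℝ) :
    ∑ i, (f i : EReal) * (g i : EReal) = ((∑ i, f i * g i : ℝ) : EReal) := by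
  simp only [← EReal.coe_mul]
  exact (map_sum (⟨⟨Real.toEReal, EReal.coe_zero⟩, EReal.coe_add⟩ : ℝ →+ EReal) _ _).symm

theorem AJNgap_gaussian {k l : ℕ} (n : Fin k → ℕ) (p : Fin l → ℕ)
    (c : Fin k → ℝ) (d : Fin l → ℝ) (B : ∀ j, Matrix (Fin (p j)) (Idx n) ℝ)
    (hsurj : ∀ j, Function.Surjective (mulVecLin (B j))) (m : ∀ i, Fin (n i) → ℝ)
    {K : ∀ i, Matrix (Fin (n i)) (Fin (n i)) ℝ} (hK : ∀ i, (K i).PosDef) :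
    AJNgap n p c d B (jointM n fun i => gaussianM (m i) (K i)) =
      ((gapConst n p c d + detGap n p c d B K / 2 : ℝ) : EReal) := by
  have := fun i => isProbabilityMeasure_gaussianM (m i) (hK i)
  simp only [AJNgap, jointM_map_proj, jointM_gaussianM_map n m hK (hsurj _),
    ent_gaussianM_fin _ (hK _),
    ent_gaussianM_fin _ (posDef_mul_mul_transpose (posDef_blockDiagonal' hK) (hsurj _))]
  rw [sum_coe_mul_coe, sum_coe_mul_coe, ← EReal.coe_sub]
  congr 1
  simp only [gapConst, detGap, add_div, mul_add, Finset.sum_add_distrib, sub_mul, sub_div,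
    Finset.sum_mul, Finset.sum_div, mul_div_assoc, mul_assoc]
  ring

theorem AJNgap_eq_top {k l : ℕ} (n : Fin k → ℕ) (p : Fin l → ℕ)
    (c : Fin k → ℝ) (d : Fin l → ℝ) (B : ∀ j, Matrix (Fin (p j)) (Idx n) ℝ)
    (hd : ∀ j, 0 < d j) {j : Fin l} (hj : ¬ Function.Surjective (mulVecLin (B j)))
    (m : ∀ i, Fin (n i) → ℝ)
    {K : ∀ i, Matrix (Fin (n i)) (Fin (n i)) ℝ} (hK : ∀ i, (K i).PosDef) :
    AJNgap n p c d B (jointM n fun i => gaussianM (m i) (K i)) = ⊤ := by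
  have := fun i => isProbabilityMeasure_gaussianM (m i) (hK i)
  have := isProbabilityMeasure_jointM n fun i => gaussianM (m i) (K i)
  rw [AJNgap, ← Finset.add_sum_erase _ _ (Finset.mem_univ j), ent_map_eq_bot hj,
    EReal.coe_mul_bot_of_pos (hd j), EReal.bot_add]
  simp only [jointM_map_proj, ent_gaussianM_fin _ (hK _)]
  rw [sum_coe_mul_coe, EReal.coe_sub_bot]

/-- Finiteness of `C_g` in terms of determinants. -/
theorem Cg_finite_iff {k l : ℕ} (n : Fin k → ℕ) (p : Fin l → ℕ)
    (c : Fin k → ℝ) (d : Fin l → ℝ) (B : ∀ j, Matrix (Fin (p j)) (Idx n) ℝ)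
    (hd : ∀ j, 0 < d j) :
    (∃ r : ℝ, Cg n p c d B = (r : EReal)) ↔
      (∀ j, Function.Surjective (mulVecLin (B j))) ∧
      ∃ C : ℝ, ∀ K : ∀ i, Matrix (Fin (n i)) (Fin (n i)) ℝ, (∀ i, (K i).PosDef) →
        detGap n p c d B K ≤ C := by
  have hmem : ∀ K : ∀ i, Matrix (Fin (n i)) (Fin (n i)) ℝ, (∀ i, (K i).PosDef) →
      AJNgap n p c d B (jointM n fun i => gaussianM 0 (K i)) ≤ Cg n p c d B := fun K hK =>
    le_sSup ⟨_, fun i => ⟨0, K i, hK i, rfl⟩, rfl⟩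
  have hone : ∀ i, (1 : Matrix (Fin (n i)) (Fin (n i)) ℝ).PosDef := fun i => Matrix.PosDef.one
  constructor
  · rintro ⟨r, hr⟩
    have hsurj : ∀ j, Function.Surjective (mulVecLin (B j)) := by
      intro j
      by_contra hj
      have := hmem _ hone
      rw [AJNgap_eq_top n p c d B hd hj _ hone, hr] at this
      exact EReal.coe_ne_top r (top_le_iff.1 this)
    refine ⟨hsurj, (r - gapConst n p c d) * 2, fun K hK => ?_⟩
    have := hmem K hK
    rw [AJNgap_gaussian n p c d B hsurj _ hK, hr, EReal.coe_le_coe_iff] at this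
    linarith
  · rintro ⟨hsurj, C, hC⟩
    have hle : Cg n p c d B ≤ ((gapConst n p c d + C / 2 : ℝ) : EReal) := by
      refine sSup_le ?_
      rintro _ ⟨μ, hμ, rfl⟩
      choose m K hK hμ using hμ
      obtain rfl : μ = fun i => gaussianM (m i) (K i) := funext hμ
      rw [AJNgap_gaussian n p c d B hsurj m hK, EReal.coe_le_coe_iff]
      linarith [hC K hK]
    have hge := hmem _ hone
    rw [AJNgap_gaussian n p c d B hsurj _ hone] at hge
    refine ⟨_, (EReal.coe_toReal ?_ ?_).symm⟩
    · exact (hle.trans_lt (EReal.coe_lt_top _)).ne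
    · exact ((EReal.bot_lt_coe _).trans_le hge).ne'

/-! ### Finiteness of the Gaussian constant -/

/-- **AJN inequality, finiteness.**
`C_g(c,d,B)` is finite iff the scaling condition and the dimension condition hold. -/
theorem AJN_finiteness {k l : ℕ} (n : Fin k → ℕ) (p : Fin l → ℕ)
    (c : Fin k → ℝ) (d : Fin l → ℝ) (B : ∀ j, Matrix (Fin (p j)) (Idx n) ℝ)
    (hc : ∀ i, 0 < c i) (hd : ∀ j, 0 < d j) :
    (∃ r : ℝ, Cg n p c d B = (r : EReal)) ↔
      ((∑ i, c i * (n i : ℝ)) = ∑ j, d j * (p j : ℝ)) ∧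
      (∀ T : Submodule ℝ (Idx n → ℝ), IsProductForm n T →
        (∑ i, c i * (Module.finrank ℝ (T.map (Matrix.mulVecLin (projMat n i))) : ℝ)) ≤
          ∑ j, d j * (Module.finrank ℝ (T.map (Matrix.mulVecLin (B j))) : ℝ)) := by
  rw [Cg_finite_iff n p c d B hd]
  constructor
  · rintro ⟨hsurj, C, hC⟩
    exact ⟨scaling_of_bounded n p c d B hsurj hC, dimension_of_bounded n p c d B hc hd hsurj hC⟩
  · rintro ⟨hs, hdim⟩
    exact ⟨surjective_of_conditions n p c d B hd hs hdim,
      detGap_bounded n p c d B hd hs hdim hc⟩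
end

section
/- (First-order optimality for Gaussian extremizers) Fix a datum (c,d,B) and positive definite K_i* on E_i, 1 ≤ i ≤ k, with K* = diag(K_1*,…,K_k*), such that B_j K* B_j^T is invertible for each j and (K_1*,…,K_k*) maximizes the function (K_1,…,K_k) ↦ Σ_{i=1}^k c_i log det(K_i) − Σ_{j=1}^m d_j log det(B_j K B_j^T), K = diag(K_1,…,K_k), over tuples of positive definite K_i. Then Σ_{j=1}^m d_j π_{E_i} B_j^T (B_j K* B_j^T)^{-1} B_j π_{E_i}^T = c_i (K_i*)^{-1} for each 1 ≤ i ≤ k. -/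
/-! Write `Aⱼ = Bⱼ K* Bⱼᵀ`.  Fix a block `i` and a symmetric direction `H` on `Eᵢ`, and replace
`Kᵢ*` by `Kᵢ* + t H`.  Positive definiteness is an open condition (`posDef_add_smul_eventually`),
so the perturbed tuple is admissible for small `t`, and the objective, as a function of `t`, has a
local maximum at `0`.  Jacobi's formula (`hasDerivAt_log_det`) gives its derivative there:
`cᵢ tr((Kᵢ*)⁻¹ H) - Σⱼ dⱼ tr(Aⱼ⁻¹ Bⱼ πᵢᵀ H πᵢ Bⱼᵀ) = tr((cᵢ (Kᵢ*)⁻¹ - Gᵢ) H)`, where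
`Gᵢ = Σⱼ dⱼ πᵢ Bⱼᵀ Aⱼ⁻¹ Bⱼ πᵢᵀ`.  This vanishes for every symmetric `H`.  The matrix
`cᵢ (Kᵢ*)⁻¹ - Gᵢ` is itself symmetric, so it may be taken as `H`; its Frobenius norm is then zero,
which is the claim. -/


open MeasureTheory ProbabilityTheory Matrix Real
open scoped ENNReal

/-- Positive definiteness is stable under small symmetric perturbations: on the compact unit sphere
the quadratic form stays positive for all small `t`. -/
lemma posDef_add_smul_eventually {ι : Type*} [Fintype ι] {K H : Matrix ι ι ℝ}
    (hK : K.PosDef) (hH : Hᵀ = H) : ∀ᶠ t : ℝ in nhds 0, (K + t • H).PosDef := by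
  have key : ∀ᶠ t : ℝ in nhds 0, ∀ x ∈ Metric.sphere (0 : ι → ℝ) 1,
      0 < x ⬝ᵥ ((K + t • H) *ᵥ x) := by
    refine (isCompact_sphere (0 : ι → ℝ) 1).eventually_forall_of_forall_eventually ?_
    intro x hx
    have hcont : Continuous fun q : ℝ × (ι → ℝ) => q.2 ⬝ᵥ ((K + q.1 • H) *ᵥ q.2) := by
      fun_prop
    refine hcont.continuousAt.eventually (lt_mem_nhds ?_)
    have hx0 : x ≠ 0 := by
      rintro rfl
      simp at hx
    simpa using hK.dotProduct_mulVec_pos hx0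
  filter_upwards [key] with t ht
  have hHt : H.IsHermitian := by
    rw [Matrix.IsHermitian, conjTranspose_eq_transpose_of_trivial, hH]
  refine PosDef.of_dotProduct_mulVec_pos (hK.isHermitian.add ?_) ?_
  · rw [Matrix.IsHermitian, conjTranspose_smul, hHt.eq, star_trivial]
  · intro x hx
    have hn : 0 < ‖x‖ := norm_pos_iff.mpr hx
    have h1 := ht (‖x‖⁻¹ • x) (by simp [norm_smul, hn.ne'])
    rw [mulVec_smul, dotProduct_smul, smul_dotProduct, smul_smul, smul_eq_mul] at h1
    simpa using pos_of_mul_pos_right h1 (by positivity)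

/-- Jacobi's formula for the logarithmic derivative of the determinant along a line.  Since
`Real.log` is `log |·|`, invertibility of `A` suffices. -/
lemma hasDerivAt_log_det {ι : Type*} [Fintype ι] [DecidableEq ι] {A : Matrix ι ι ℝ}
    (hA : IsUnit A) (M : Matrix ι ι ℝ) :
    HasDerivAt (fun t : ℝ => Real.log (A + t • M).det) (A⁻¹ * M).trace 0 := by
  have hdet : IsUnit A.det := (Matrix.isUnit_iff_isUnit_det A).mp hA
  have hfac : ∀ t : ℝ, (A + t • M).det = A.det * (1 + t • (A⁻¹ * M)).det := by
    intro t
    rw [← det_mul, mul_add, mul_one, mul_smul_comm, mul_nonsing_inv_cancel_left _ _ hdet]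
  have hlin : HasDerivAt (fun t : ℝ => (1 + t • (A⁻¹ * M)).det) (A⁻¹ * M).trace 0 := by
    set P := Polynomial.divX (Polynomial.divX
      (det (1 + (Polynomial.X : Polynomial ℝ) • (A⁻¹ * M).map Polynomial.C)))
    have := (((hasDerivAt_id (0 : ℝ)).const_mul (A⁻¹ * M).trace).const_add 1).add
      ((P.hasDerivAt 0).mul ((hasDerivAt_id (0 : ℝ)).pow 2))
    refine (this.congr_deriv (by simp)).congr_of_eventuallyEq (Filter.Eventually.of_forall fun t => ?_)
    simpa [P] using! det_one_add_smul t (A⁻¹ * M)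
  have h := (hlin.const_mul A.det).log (by simpa using hdet.ne_zero)
  simp_rw [hfac]
  convert h using 1
  simp [hdet.ne_zero]

lemma blockDiag_update {k : ℕ} (n : Fin k → ℕ) (K : ∀ i, Matrix (Fin (n i)) (Fin (n i)) ℝ)
    (i : Fin k) (H : Matrix (Fin (n i)) (Fin (n i)) ℝ) (t : ℝ) :
    blockDiag n (Function.update K i (K i + t • H)) =
      blockDiag n K + t • ((projMat n i)ᵀ * H * projMat n i) := by
  unfold _root_.blockDiag
  rw [← Finset.add_sum_erase _ _ (Finset.mem_univ i),
    ← Finset.add_sum_erase (a := i) (f := fun i => (projMat n i)ᵀ * K i * projMat n i) _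
      (Finset.mem_univ i)]
  rw [Finset.sum_congr rfl (g := fun i => (projMat n i)ᵀ * K i * projMat n i)]
  · simp only [Function.update_self, Matrix.mul_add, Matrix.add_mul, Matrix.mul_smul, Matrix.smul_mul]
    abel
  · intro j hj
    rw [Function.update_of_ne (Finset.ne_of_mem_erase hj)]

lemma blockDiag_transpose {k : ℕ} (n : Fin k → ℕ) {K : ∀ i, Matrix (Fin (n i)) (Fin (n i)) ℝ}
    (hK : ∀ i, (K i)ᵀ = K i) : (blockDiag n K)ᵀ = blockDiag n K := by
  simp [_root_.blockDiag, transpose_sum, transpose_mul, hK, Matrix.mul_assoc]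

/-- **First-order optimality for Gaussian extremizers.**
If positive definite blocks `Kᵢ*` maximize
`(K₁,…,K_k) ↦ Σᵢ cᵢ log det Kᵢ − Σⱼ dⱼ log det (Bⱼ K Bⱼᵀ)` over tuples of positive definite
matrices, and each `Bⱼ K* Bⱼᵀ` is invertible, then
`Σⱼ dⱼ π_{Eᵢ} Bⱼᵀ (Bⱼ K* Bⱼᵀ)⁻¹ Bⱼ πᵀ_{Eᵢ} = cᵢ (Kᵢ*)⁻¹` for each `i`. -/
theorem gaussian_first_order_optimality {k l : ℕ} (n : Fin k → ℕ) (p : Fin l → ℕ)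
    (c : Fin k → ℝ) (d : Fin l → ℝ) (B : ∀ j, Matrix (Fin (p j)) (Idx n) ℝ)
    (hc : ∀ i, 0 < c i) (hd : ∀ j, 0 < d j)
    (Kstar : ∀ i, Matrix (Fin (n i)) (Fin (n i)) ℝ)
    (hKstar : ∀ i, (Kstar i).PosDef)
    (hinv : ∀ j, IsUnit (B j * blockDiag n Kstar * (B j)ᵀ))
    (hmax : ∀ K : ∀ i, Matrix (Fin (n i)) (Fin (n i)) ℝ, (∀ i, (K i).PosDef) →
      (∑ i, c i * Real.log (K i).det) -
          (∑ j, d j * Real.log (B j * blockDiag n K * (B j)ᵀ).det) ≤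
        (∑ i, c i * Real.log (Kstar i).det) -
          ∑ j, d j * Real.log (B j * blockDiag n Kstar * (B j)ᵀ).det) :
    ∀ i, ∑ j, d j • (projMat n i * (B j)ᵀ * (B j * blockDiag n Kstar * (B j)ᵀ)⁻¹ *
        B j * (projMat n i)ᵀ) = c i • (Kstar i)⁻¹ := by
  intro i
  have hKt : ∀ i, (Kstar i)ᵀ = Kstar i := fun i => by
    simpa using (hKstar i).isHermitian.eq
  have hAt : ∀ j, (B j * blockDiag n Kstar * (B j)ᵀ)ᵀ = B j * blockDiag n Kstar * (B j)ᵀ := by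
    intro j
    simp [transpose_mul, blockDiag_transpose n hKt, Matrix.mul_assoc]
  set A : ∀ j, Matrix (Fin (p j)) (Fin (p j)) ℝ := fun j => B j * blockDiag n Kstar * (B j)ᵀ
    with hA
  set G := ∑ j, d j • (projMat n i * (B j)ᵀ * (A j)⁻¹ * B j * (projMat n i)ᵀ) with hG
  set H := c i • (Kstar i)⁻¹ - G with hH
  have hGt : Gᵀ = G := by
    rw [hG, transpose_sum]
    refine Finset.sum_congr rfl fun j _ => ?_
    have hAj : (A j)ᵀ = A j := hAt j
    simp only [transpose_smul, transpose_mul, transpose_transpose, transpose_nonsing_inv, hAj,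
      Matrix.mul_assoc]
  have hHt : Hᵀ = H := by
    rw [hH, transpose_sub, transpose_smul, transpose_nonsing_inv, hKt, hGt]
  let K : ℝ → ∀ i, Matrix (Fin (n i)) (Fin (n i)) ℝ := fun t =>
    Function.update Kstar i (Kstar i + t • H)
  have hK0 : K 0 = Kstar := by simp [K]
  have hBK : ∀ j t, B j * blockDiag n (K t) * (B j)ᵀ =
      A j + t • (B j * ((projMat n i)ᵀ * H * projMat n i) * (B j)ᵀ) := by
    intro j t
    simp only [K, blockDiag_update, Matrix.mul_add, Matrix.add_mul, Matrix.mul_smul, Matrix.smul_mul, hA]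
  have hloc : IsLocalMax (fun t => (∑ i, c i * Real.log (K t i).det) -
      ∑ j, d j * Real.log (B j * blockDiag n (K t) * (B j)ᵀ).det) 0 := by
    filter_upwards [posDef_add_smul_eventually (hKstar i) hHt] with t ht
    simp only [hK0]
    refine hmax (K t) fun i' => ?_
    by_cases h : i' = i
    · subst h
      simpa [K] using ht
    · simpa [K, h] using hKstar i'
  have hd1 : HasDerivAt (fun t => ∑ i', c i' * Real.log (K t i').det)
      (c i * ((Kstar i)⁻¹ * H).trace) 0 := by
    have h : HasDerivAt (fun t => ∑ i', c i' * Real.log (K t i').det)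
        (∑ i', if i' = i then c i * ((Kstar i)⁻¹ * H).trace else 0) 0 := by
      refine HasDerivAt.fun_sum fun i' _ => ?_
      by_cases h : i' = i
      · subst h
        simpa [K] using! (hasDerivAt_log_det (hKstar i').isUnit H).const_mul (c i')
      · simpa [K, h] using hasDerivAt_const (0 : ℝ) (c i' * Real.log (Kstar i').det)
    simpa using h
  have hd2 : HasDerivAt (fun t => ∑ j, d j * Real.log (B j * blockDiag n (K t) * (B j)ᵀ).det)
      (∑ j, d j * ((A j)⁻¹ *
        (B j * ((projMat n i)ᵀ * H * projMat n i) * (B j)ᵀ)).trace) 0 := by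
    refine HasDerivAt.fun_sum fun j _ => ?_
    simp_rw [hBK]
    exact (hasDerivAt_log_det (hinv j) _).const_mul (d j)
  have hzero := hloc.hasDerivAt_eq_zero (hd1.sub hd2)
  have htrG : (G * H).trace = ∑ j, d j * ((A j)⁻¹ *
      (B j * ((projMat n i)ᵀ * H * projMat n i) * (B j)ᵀ)).trace := by
    rw [hG, Finset.sum_mul, trace_sum]
    refine Finset.sum_congr rfl fun j _ => ?_
    rw [smul_mul_assoc, trace_smul, smul_eq_mul]
    congr 1
    -- Cyclicity of the trace moves `πᵢ Bⱼᵀ` from the front to the back.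
    calc _ = ((projMat n i * (B j)ᵀ) * ((A j)⁻¹ * B j * (projMat n i)ᵀ * H)).trace := by
          simp only [Matrix.mul_assoc]
      _ = _ := by
          rw [trace_mul_comm]
          simp only [Matrix.mul_assoc]
  have htr : (Hᴴ * H).trace = 0 := by
    rw [conjTranspose_eq_transpose_of_trivial, hHt]
    nth_rewrite 1 [hH]
    rw [sub_mul, trace_sub, smul_mul_assoc, trace_smul, smul_eq_mul, htrG]
    exact hzero
  exact (sub_eq_zero.mp (trace_conjTranspose_mul_self_eq_zero_iff.mp htr)).symm
end

section
/- (Log-convexity after Gaussian smoothing) Let E be a Euclidean space, let μ ∈ P(E) have density f with respect to the standard Gaussian measure γ_E, and let P_s denote the heat semigroup, (P_s g)(x) = ∫_E g(x+y) dN(0, s·id_E)(y). If μ is of the form μ = ν * γ_E for some probability measure ν on E, then the Hessian ∇² log P_{1−t} f(x) is positive semidefinite for every x ∈ E and every 0 < t < 1. -/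
/-!
If `μ = ν * γ`, completing the square gives the density of `μ` with respect to `γ` as
`f(x) = ∫ exp (⟨x, z⟩ - |z|² / 2) dν(z)` for almost every `x` (`map_add_stdGaussianE`). The heat flow
acts explicitly on each exponential, and Tonelli's theorem yields
`P_{1-t} f(x) = ∫ exp (⟨x, z⟩ - t |z|² / 2) dν(z)` for every `x` (`heat_eq_gaussLaplace`). This is the
Laplace transform of a finite measure, finite everywhere because `t > 0`. Its logarithm restricted
to a line is a cumulant generating function, whose second derivative is nonnegative
(`iteratedFDeriv_log_gaussLaplace_nonneg`).

The identification of `f` uses uniqueness of densities and hence a.e. measurability of `f`. When that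
fails, the Bochner integral defining `heat` is `0` everywhere, and the Hessian in question is that
of a constant function (`heat_eq_zero_of_not_aemeasurable`).
-/


open MeasureTheory Real
open scoped ENNReal

noncomputable section

/-- The standard Gaussian measure on a Euclidean space. -/
noncomputable def stdGaussianE (ι : Type*) [Fintype ι] : Measure (EuclideanSpace ℝ ι) :=
  volume.withDensity fun x =>
    ENNReal.ofReal ((2 * Real.pi) ^ (-(Fintype.card ι : ℝ) / 2) * Real.exp (-‖x‖ ^ 2 / 2))

/-- The heat semigroup: `(P_s g)(x) = ∫ g(x+y) dN(0, s·id)(y)`, written out with the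
Gaussian density. -/
noncomputable def heat {N : ℕ} (s : ℝ) (g : EuclideanSpace ℝ (Fin N) → ℝ)
    (x : EuclideanSpace ℝ (Fin N)) : ℝ :=
  ∫ y, g (x + y) * ((2 * Real.pi * s) ^ (-(N : ℝ) / 2) * Real.exp (-‖y‖ ^ 2 / (2 * s)))

end

open ProbabilityTheory

open scoped RealInnerProductSpace

/-! ### Log-convexity of Gaussian-weighted Laplace transforms -/

/-- The exponential weight `exp (⟨y, z⟩ - a |z|² / 2)`. -/
noncomputable def gaussWeight {N : ℕ} (a : ℝ) (y z : EuclideanSpace ℝ (Fin N)) : ℝ :=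
  Real.exp (⟪z, y⟫ - a / 2 * ‖z‖ ^ 2)

/-- The Laplace transform at `y` of the measure `exp (-a |z|² / 2) dν(z)`. For `a > 0` and
`ν` a probability measure the integral converges for every `y`. -/
noncomputable def gaussLaplace {N : ℕ} (a : ℝ) (ν : Measure (EuclideanSpace ℝ (Fin N)))
    (y : EuclideanSpace ℝ (Fin N)) : ℝ :=
  ∫ z, gaussWeight a y z ∂ν

section Laplace

variable {N : ℕ}

lemma gaussWeight_pos (a : ℝ) (y z : EuclideanSpace ℝ (Fin N)) : 0 < gaussWeight a y z :=
  Real.exp_pos _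

lemma continuous_gaussWeight (a : ℝ) :
    Continuous fun p : EuclideanSpace ℝ (Fin N) × EuclideanSpace ℝ (Fin N) =>
      gaussWeight a p.1 p.2 := by
  unfold gaussWeight
  fun_prop

lemma gaussWeight_le {a : ℝ} (ha : 0 < a) {R : ℝ} {y : EuclideanSpace ℝ (Fin N)}
    (hy : ‖y‖ ≤ R) (z : EuclideanSpace ℝ (Fin N)) :
    gaussWeight a y z ≤ Real.exp (R ^ 2 / (2 * a)) := by
  refine Real.exp_le_exp.2 ?_
  have h1 : ⟪z, y⟫ ≤ ‖z‖ * R :=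
    (real_inner_le_norm z y).trans (mul_le_mul_of_nonneg_left hy (norm_nonneg _))
  have h2 : R ^ 2 / (2 * a) - (‖z‖ * R - a / 2 * ‖z‖ ^ 2) = (R - a * ‖z‖) ^ 2 / (2 * a) := by
    field_simp
    ring
  have h3 : 0 ≤ (R - a * ‖z‖) ^ 2 / (2 * a) := by positivity
  linarith

/-- Bound on the gradient of the weight, uniform in `z` and locally uniform in `y`; it
justifies differentiation under the integral sign. -/
lemma norm_mul_gaussWeight_le {a : ℝ} (ha : 0 < a) {R : ℝ} {y : EuclideanSpace ℝ (Fin N)}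
    (hy : ‖y‖ ≤ R) (z : EuclideanSpace ℝ (Fin N)) :
    gaussWeight a y z * ‖z‖ ≤ Real.exp ((R + 1) ^ 2 / (2 * a)) := by
  have h1 : ⟪z, y⟫ ≤ ‖z‖ * R :=
    (real_inner_le_norm z y).trans (mul_le_mul_of_nonneg_left hy (norm_nonneg _))
  have h2 : (R + 1) ^ 2 / (2 * a) - (‖z‖ * (R + 1) - a / 2 * ‖z‖ ^ 2)
      = (R + 1 - a * ‖z‖) ^ 2 / (2 * a) := by
    field_simp
    ring
  have h3 : 0 ≤ (R + 1 - a * ‖z‖) ^ 2 / (2 * a) := by positivity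
  have h4 : ‖z‖ ≤ Real.exp ‖z‖ := by linarith [Real.add_one_le_exp ‖z‖]
  calc gaussWeight a y z * ‖z‖ ≤ gaussWeight a y z * Real.exp ‖z‖ :=
        mul_le_mul_of_nonneg_left h4 (gaussWeight_pos _ _ _).le
    _ = Real.exp (⟪z, y⟫ - a / 2 * ‖z‖ ^ 2 + ‖z‖) := by rw [gaussWeight, Real.exp_add]
    _ ≤ _ := Real.exp_le_exp.2 (by linarith)

variable (ν : Measure (EuclideanSpace ℝ (Fin N))) [IsProbabilityMeasure ν]

lemma integrable_gaussWeight {a : ℝ} (ha : 0 < a) (y : EuclideanSpace ℝ (Fin N)) :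
    Integrable (gaussWeight a y) ν := by
  refine Integrable.mono' (integrable_const (Real.exp (‖y‖ ^ 2 / (2 * a))))
    (((continuous_gaussWeight a).comp (Continuous.prodMk_right y)).aestronglyMeasurable) ?_
  refine .of_forall fun z => ?_
  rw [Real.norm_of_nonneg (gaussWeight_pos _ _ _).le]
  exact gaussWeight_le ha le_rfl z

lemma gaussLaplace_pos {a : ℝ} (ha : 0 < a) (y : EuclideanSpace ℝ (Fin N)) :
    0 < gaussLaplace a ν y :=
  integral_exp_pos (integrable_gaussWeight ν ha y)

lemma differentiable_gaussLaplace {a : ℝ} (ha : 0 < a) :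
    Differentiable ℝ (gaussLaplace a ν) := by
  intro x
  have hF' : ∀ y z : EuclideanSpace ℝ (Fin N),
      HasFDerivAt (fun y => gaussWeight a y z) (gaussWeight a y z • innerSL ℝ z) y := by
    intro y z
    have := ((innerSL ℝ z).hasFDerivAt (x := y)).sub_const (a / 2 * ‖z‖ ^ 2)
    simpa [gaussWeight] using this.exp
  refine (hasFDerivAt_integral_of_dominated_of_fderiv_le (s := Metric.ball x 1)
    (F' := fun y z => gaussWeight a y z • innerSL ℝ z)
    (bound := fun _ => Real.exp ((‖x‖ + 1 + 1) ^ 2 / (2 * a)))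
    (Metric.ball_mem_nhds x one_pos) ?_ (integrable_gaussWeight ν ha x) ?_ ?_
    (integrable_const _) ?_).differentiableAt
  · exact .of_forall fun y => (integrable_gaussWeight ν ha y).1
  · exact ((((continuous_gaussWeight a).comp (Continuous.prodMk_right x))).smul
      (innerSL ℝ).continuous).aestronglyMeasurable
  · refine .of_forall fun z y hy => ?_
    rw [norm_smul, innerSL_apply_norm, Real.norm_of_nonneg (gaussWeight_pos _ _ _).le]
    refine norm_mul_gaussWeight_le ha ?_ z
    have : ‖y - x‖ < 1 := by simpa [dist_eq_norm] using hy
    have := norm_add_le (y - x) x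
    rw [sub_add_cancel] at this
    linarith
  · exact .of_forall fun z y _ => hF' y z

/-- Along a line `u ↦ x + u v`, the logarithm of the Laplace transform is the cumulant
generating function of `⟨·, v⟩` under the measure `gaussWeight a x · dν`, whose second derivative
is, after normalization, a variance. -/
lemma iteratedFDeriv_log_gaussLaplace_nonneg {a : ℝ} (ha : 0 < a)
    (x v : EuclideanSpace ℝ (Fin N)) :
    0 ≤ iteratedFDeriv ℝ 2 (fun y => Real.log (gaussLaplace a ν y)) x ![v, v] := by
  set L := fun y => Real.log (gaussLaplace a ν y) with hL
  have hLd : Differentiable ℝ L := fun y =>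
    (differentiable_gaussLaplace ν ha y).log (gaussLaplace_pos ν ha y).ne'
  rw [iteratedFDeriv_two_apply]
  simp only [Matrix.cons_val_zero, Matrix.cons_val_one]
  -- Without second differentiability the Hessian is `0` by convention, so no smoothness of `L`
  -- beyond first order is needed.
  by_cases hd : DifferentiableAt ℝ (fderiv ℝ L) x
  swap
  · simp [fderiv_zero_of_not_differentiableAt hd]
  set ρ : Measure (EuclideanSpace ℝ (Fin N)) :=
    ν.withDensity fun z => ENNReal.ofReal (gaussWeight a x z) with hρ
  set X : EuclideanSpace ℝ (Fin N) → ℝ := fun z => ⟪z, v⟫ with hX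
  have hmeas : Measurable fun z => ENNReal.ofReal (gaussWeight a x z) :=
    (((continuous_gaussWeight a).comp (Continuous.prodMk_right x))).measurable.ennreal_ofReal
  have hmul : ∀ (u : ℝ) z, gaussWeight a x z * Real.exp (u * X z)
      = gaussWeight a (x + u • v) z := by
    intro u z
    rw [gaussWeight, gaussWeight, ← Real.exp_add, inner_add_right, inner_smul_right]
    congr 1
    ring
  have hexp : integrableExpSet X ρ = Set.univ := by
    refine Set.eq_univ_of_forall fun u => ?_
    change Integrable _ _
    rw [hρ, integrable_withDensity_iff_integrable_smul' hmeas (by simp)]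
    refine (integrable_gaussWeight ν ha (x + u • v)).congr (.of_forall fun z => ?_)
    simp [ENNReal.toReal_ofReal (gaussWeight_pos a x z).le, hmul]
  have hcgf : cgf X ρ = fun u : ℝ => L (x + u • v) := by
    funext u
    rw [cgf, mgf, hρ, integral_withDensity_eq_integral_toReal_smul hmeas (by simp)]
    simp only [hL, gaussLaplace]
    congr 2
    funext z
    simp [ENNReal.toReal_ofReal (gaussWeight_pos a x z).le, hmul]
  have hline : ∀ u : ℝ, HasDerivAt (fun u : ℝ => x + u • v) v u := by
    intro u
    simpa using ((hasDerivAt_id u).smul_const v).const_add x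
  have hderiv : deriv (cgf X ρ) = fun u : ℝ => fderiv ℝ L (x + u • v) v := by
    funext u
    rw [hcgf]
    exact ((hLd (x + u • v)).hasFDerivAt.comp_hasDerivAt u (hline u)).deriv
  have hderiv2 : iteratedDeriv 2 (cgf X ρ) 0 = fderiv ℝ (fderiv ℝ L) x v v := by
    rw [iteratedDeriv_succ, iteratedDeriv_one, hderiv]
    have h0 : HasFDerivAt (fderiv ℝ L) (fderiv ℝ (fderiv ℝ L) x) (x + (0 : ℝ) • v) := by
      simpa using hd.hasFDerivAt
    have h1 := h0.comp_hasDerivAt (0 : ℝ) (hline 0)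
    exact (h1.clm_apply (hasDerivAt_const (0 : ℝ) v)).deriv.trans (by simp)
  rw [← hderiv2, iteratedDeriv_two_cgf_eq_integral (by simp [hexp])]
  exact div_nonneg (integral_nonneg fun z => by positivity) mgf_nonneg

end Laplace

/-! ### Gaussian convolutions and the heat flow -/

section Density

variable {N : ℕ}

/-- Completing the square: `gaussWeight 1 x z` is the ratio of the densities of
`N(z, id)` and `N(0, id)` at `x`. -/
lemma gaussWeight_one_mul (x z : EuclideanSpace ℝ (Fin N)) :
    gaussWeight 1 x z * Real.exp (-‖x‖ ^ 2 / 2) = Real.exp (-‖x - z‖ ^ 2 / 2) := by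
  rw [gaussWeight, ← Real.exp_add, norm_sub_sq_real, real_inner_comm]
  congr 1
  ring

lemma measurable_ofReal_gaussWeight {α : Type*} [MeasurableSpace α] (a : ℝ)
    {u v : α → EuclideanSpace ℝ (Fin N)} (hu : Measurable u) (hv : Measurable v) :
    Measurable fun p => ENNReal.ofReal (gaussWeight a (u p) (v p)) := by
  unfold gaussWeight
  exact ((hv.inner hu).sub ((hv.norm.pow_const 2).const_mul _)).exp.ennreal_ofReal

/-- The density of `ν * γ` with respect to the standard Gaussian `γ`:
`x ↦ ∫ exp (⟨x, z⟩ - |z|² / 2) dν(z)`, as an extended nonnegative number. -/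
noncomputable def convDensity (ν : Measure (EuclideanSpace ℝ (Fin N)))
    (x : EuclideanSpace ℝ (Fin N)) : ℝ≥0∞ :=
  ∫⁻ z, ENNReal.ofReal (gaussWeight 1 x z) ∂ν

lemma measurable_convDensity (ν : Measure (EuclideanSpace ℝ (Fin N))) [SFinite ν] :
    Measurable (convDensity ν) :=
  (measurable_ofReal_gaussWeight 1 measurable_fst measurable_snd).lintegral_prod_right'

lemma measurable_stdGaussianE_density : Measurable fun x : EuclideanSpace ℝ (Fin N) =>
    ENNReal.ofReal ((2 * Real.pi) ^ (-(Fintype.card (Fin N) : ℝ) / 2)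
      * Real.exp (-‖x‖ ^ 2 / 2)) := by
  fun_prop

lemma volume_absolutelyContinuous_stdGaussianE :
    (volume : Measure (EuclideanSpace ℝ (Fin N))) ≪ stdGaussianE (Fin N) := by
  refine withDensity_absolutelyContinuous' measurable_stdGaussianE_density.aemeasurable
    (.of_forall fun x => ?_)
  rw [Ne, ENNReal.ofReal_eq_zero, not_le]
  positivity

instance : SFinite (stdGaussianE (Fin N)) := by
  unfold stdGaussianE
  infer_instance

/-- The law `ν * γ` has density `convDensity ν` with respect to `γ`: translate the Gaussian density
by each point `z` of `ν` and exchange the integrals by Tonelli's theorem. -/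
lemma map_add_stdGaussianE (ν : Measure (EuclideanSpace ℝ (Fin N))) [IsProbabilityMeasure ν] :
    (ν.prod (stdGaussianE (Fin N))).map (fun q => q.1 + q.2)
      = (stdGaussianE (Fin N)).withDensity (convDensity ν) := by
  have hconv : Measurable (convDensity ν) := measurable_convDensity ν
  ext s hs
  set g : EuclideanSpace ℝ (Fin N) → ℝ≥0∞ := s.indicator 1 with hg
  have hgm : Measurable g := measurable_one.indicator hs
  rw [← lintegral_indicator_one hs, ← lintegral_indicator_one hs, ← hg,
    lintegral_map hgm (by fun_prop),
    lintegral_prod (fun q => g (q.1 + q.2)) (hgm.comp (by fun_prop)).aemeasurable,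
    lintegral_withDensity_eq_lintegral_mul _ hconv hgm, stdGaussianE,
    lintegral_withDensity_eq_lintegral_mul _ measurable_stdGaussianE_density (hconv.mul hgm)]
  set φ : EuclideanSpace ℝ (Fin N) → ℝ≥0∞ := fun x =>
    ENNReal.ofReal ((2 * Real.pi) ^ (-(Fintype.card (Fin N) : ℝ) / 2)
      * Real.exp (-‖x‖ ^ 2 / 2)) with hφ
  have hφm : Measurable φ := measurable_stdGaussianE_density
  have hshift : ∀ x z, φ (x - z) = φ x * ENNReal.ofReal (gaussWeight 1 x z) := by
    intro x z
    simp only [hφ]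
    rw [← ENNReal.ofReal_mul (by positivity), ← gaussWeight_one_mul]
    congr 1
    ring
  calc ∫⁻ z, ∫⁻ y, g (z + y) ∂((volume : Measure (EuclideanSpace ℝ (Fin N))).withDensity φ) ∂ν
      = ∫⁻ z, ∫⁻ x, φ x * ENNReal.ofReal (gaussWeight 1 x z) * g x ∂volume ∂ν := by
        refine lintegral_congr fun z => ?_
        have hgz : Measurable fun y => g (z + y) := hgm.comp (measurable_const_add z)
        rw [lintegral_withDensity_eq_lintegral_mul _ hφm hgz,
          ← lintegral_add_left_eq_self
            (fun x => φ x * ENNReal.ofReal (gaussWeight 1 x z) * g x) z]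
        refine lintegral_congr fun y => ?_
        rw [← hshift]
        simp
    _ = ∫⁻ x, ∫⁻ z, φ x * ENNReal.ofReal (gaussWeight 1 x z) * g x ∂ν ∂volume := by
        have h1 : Measurable fun p : EuclideanSpace ℝ (Fin N) × EuclideanSpace ℝ (Fin N) =>
            ENNReal.ofReal (gaussWeight 1 p.2 p.1) :=
          measurable_ofReal_gaussWeight 1 measurable_snd measurable_fst
        have h2 : Measurable (Function.uncurry fun z x =>
            φ x * ENNReal.ofReal (gaussWeight 1 x z) * g x) :=
          ((hφm.comp measurable_snd).fun_mul h1).fun_mul (hgm.comp measurable_snd)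
        exact lintegral_lintegral_swap h2.aemeasurable
    _ = _ := by
        refine lintegral_congr fun x => ?_
        have hm : Measurable fun z => ENNReal.ofReal (gaussWeight 1 x z) :=
          measurable_ofReal_gaussWeight 1 measurable_const measurable_id
        rw [lintegral_mul_const _ (hm.const_mul _), lintegral_const_mul _ hm]
        simp [convDensity, mul_assoc]

/-- The density of `N(0, s·id)`, as it appears in the definition of `heat`. -/
noncomputable def heatKernel (N : ℕ) (s : ℝ) (y : EuclideanSpace ℝ (Fin N)) : ℝ :=
  (2 * Real.pi * s) ^ (-(N : ℝ) / 2) * Real.exp (-‖y‖ ^ 2 / (2 * s))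

lemma heatKernel_pos {s : ℝ} (hs : 0 < s) (y : EuclideanSpace ℝ (Fin N)) :
    0 < heatKernel N s y := by
  unfold heatKernel
  positivity

lemma continuous_heatKernel (s : ℝ) : Continuous (heatKernel N s) := by
  unfold heatKernel
  fun_prop

lemma lintegral_heatKernel {s : ℝ} (hs : 0 < s) :
    ∫⁻ y, ENNReal.ofReal (heatKernel N s y) = 1 := by
  have hI : ∫ y, heatKernel N s y = 1 := by
    have h := GaussianFourier.integral_rexp_neg_mul_sq_norm
      (V := EuclideanSpace ℝ (Fin N)) (b := 1 / (2 * s)) (by positivity)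
    have he : ∀ y : EuclideanSpace ℝ (Fin N),
        heatKernel N s y
          = (2 * Real.pi * s) ^ (-(N : ℝ) / 2) * Real.exp (-(1 / (2 * s)) * ‖y‖ ^ 2) := by
      intro y
      rw [heatKernel]
      congr 2
      ring
    simp_rw [he]
    rw [integral_const_mul, h, finrank_euclideanSpace_fin,
      show Real.pi / (1 / (2 * s)) = 2 * Real.pi * s by field_simp,
      ← Real.rpow_add (by positivity)]
    simp [neg_div]
  rw [← ofReal_integral_eq_lintegral_ofReal (Integrable.of_integral_ne_zero (by simp [hI]))
    (.of_forall fun y => (heatKernel_pos hs y).le), hI, ENNReal.ofReal_one]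

/-- Completing the square in `y`: up to a translation of the heat kernel, the heat flow at
time `s` turns the exponential weight with parameter `1` into the one with parameter `1 - s`. -/
lemma gaussWeight_mul_heatKernel {s : ℝ} (hs : 0 < s) (x y z : EuclideanSpace ℝ (Fin N)) :
    gaussWeight 1 (x + y) z * heatKernel N s y
      = gaussWeight (1 - s) x z * heatKernel N s (y - s • z) := by
  unfold gaussWeight heatKernel
  rw [mul_left_comm, mul_left_comm (Real.exp (_ - (1 - s) / 2 * _)), ← Real.exp_add,
    ← Real.exp_add, norm_sub_sq_real, inner_add_right, inner_smul_right, norm_smul,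
    real_inner_comm z y, Real.norm_of_nonneg hs.le]
  congr 2
  field_simp
  ring

lemma lintegral_gaussWeight_mul_heatKernel {s : ℝ} (hs : 0 < s)
    (x z : EuclideanSpace ℝ (Fin N)) :
    ∫⁻ y, ENNReal.ofReal (gaussWeight 1 (x + y) z) * ENNReal.ofReal (heatKernel N s y)
      = ENNReal.ofReal (gaussWeight (1 - s) x z) := by
  have h : ∀ y, ENNReal.ofReal (gaussWeight 1 (x + y) z) * ENNReal.ofReal (heatKernel N s y)
      = ENNReal.ofReal (gaussWeight (1 - s) x z) * ENNReal.ofReal (heatKernel N s (y - s • z)) := by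
    intro y
    rw [← ENNReal.ofReal_mul (gaussWeight_pos _ _ _).le, gaussWeight_mul_heatKernel hs,
      ENNReal.ofReal_mul (gaussWeight_pos _ _ _).le]
  simp_rw [h]
  have hm : Measurable fun y => ENNReal.ofReal (heatKernel N s y) :=
    (continuous_heatKernel s).measurable.ennreal_ofReal
  have hms : Measurable fun y => ENNReal.ofReal (heatKernel N s (y - s • z)) :=
    hm.comp (measurable_sub_const _)
  rw [lintegral_const_mul _ hms,
    lintegral_sub_right_eq_self (fun y => ENNReal.ofReal (heatKernel N s y)),
    lintegral_heatKernel hs, mul_one]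

/-- The heat flow of the density of `ν * γ` is the Laplace transform of `ν` with the
quadratic weight of parameter `1 - s > 0`. -/
lemma heat_eq_gaussLaplace {ν : Measure (EuclideanSpace ℝ (Fin N))} [IsProbabilityMeasure ν]
    {f : EuclideanSpace ℝ (Fin N) → ℝ} (hf : ∀ x, 0 ≤ f x) (hfm : AEMeasurable f volume)
    (hfν : (fun x => ENNReal.ofReal (f x)) =ᵐ[volume] convDensity ν)
    {s : ℝ} (hs : s ∈ Set.Ioo (0 : ℝ) 1) :
    heat s f = gaussLaplace (1 - s) ν := by
  funext x
  have hqmp := (measurePreserving_add_left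
    (volume : Measure (EuclideanSpace ℝ (Fin N))) x).quasiMeasurePreserving
  have hkm := continuous_heatKernel (N := N) s
  have hk0 : ∀ y, 0 ≤ heatKernel N s y := fun y => (heatKernel_pos hs.1 y).le
  change ∫ y, f (x + y) * heatKernel N s y = ∫ z, gaussWeight (1 - s) x z ∂ν
  rw [integral_eq_lintegral_of_nonneg_ae (.of_forall fun y => mul_nonneg (hf _) (hk0 y))
      ((hfm.comp_quasiMeasurePreserving hqmp).mul hkm.aemeasurable).aestronglyMeasurable,
    integral_eq_lintegral_of_nonneg_ae (.of_forall fun z => (gaussWeight_pos _ _ _).le)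
      (integrable_gaussWeight ν (by linarith [hs.2]) x).1]
  congr 1
  have hm : Measurable fun p : EuclideanSpace ℝ (Fin N) × EuclideanSpace ℝ (Fin N) =>
      ENNReal.ofReal (gaussWeight 1 (x + p.1) p.2) :=
    measurable_ofReal_gaussWeight 1 (measurable_fst.const_add x) measurable_snd
  calc ∫⁻ y, ENNReal.ofReal (f (x + y) * heatKernel N s y)
      = ∫⁻ y, ∫⁻ z, ENNReal.ofReal (gaussWeight 1 (x + y) z)
          * ENNReal.ofReal (heatKernel N s y) ∂ν := by
        refine lintegral_congr_ae ?_
        filter_upwards [hqmp.ae_eq_comp hfν] with y hy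
        have hmz : Measurable fun z => ENNReal.ofReal (gaussWeight 1 (x + y) z) :=
          measurable_ofReal_gaussWeight 1 measurable_const measurable_id
        rw [lintegral_mul_const _ hmz, ENNReal.ofReal_mul (hf _)]
        congr 1
    _ = ∫⁻ z, ∫⁻ y, ENNReal.ofReal (gaussWeight 1 (x + y) z)
          * ENNReal.ofReal (heatKernel N s y) ∂volume ∂ν := by
        have h2 : Measurable (Function.uncurry fun y z =>
            ENNReal.ofReal (gaussWeight 1 (x + y) z) * ENNReal.ofReal (heatKernel N s y)) :=
          hm.fun_mul (hkm.measurable.ennreal_ofReal.comp measurable_fst)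
        exact lintegral_lintegral_swap h2.aemeasurable
    _ = _ := lintegral_congr fun z => lintegral_gaussWeight_mul_heatKernel hs.1 x z

/-- The heat kernel is positive and continuous, so the integrand defining `heat s f x` is
measurable only if `f` is; otherwise the Bochner integral takes the default value `0`. -/
lemma heat_eq_zero_of_not_aemeasurable {f : EuclideanSpace ℝ (Fin N) → ℝ}
    (hfm : ¬ AEMeasurable f volume) {s : ℝ} (hs : 0 < s) : heat s f = 0 := by
  funext x
  refine integral_non_aestronglyMeasurable fun h => hfm ?_
  change AEStronglyMeasurable (fun y => f (x + y) * heatKernel N s y) volume at h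
  have hq : AEMeasurable (fun y => f (x + y)) volume := by
    refine (h.aemeasurable.div (continuous_heatKernel s).aemeasurable).congr
      (.of_forall fun y => ?_)
    simp [(heatKernel_pos hs y).ne']
  have := hq.comp_quasiMeasurePreserving (measurePreserving_add_left
    (volume : Measure (EuclideanSpace ℝ (Fin N))) (-x)).quasiMeasurePreserving
  simpa [Function.comp_def] using this

end Density

/-- **Log-convexity after Gaussian smoothing.** If `μ ∈ 𝒫(E)` has density `f`
with respect to the standard Gaussian `γ_E` and `μ = ν * γ_E` for some probability measure
`ν`, then `∇² log P_{1−t} f(x)` is positive semidefinite for every `x` and every `0 < t < 1`. -/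
theorem log_convexity_after_smoothing {N : ℕ}
    (μ : Measure (EuclideanSpace ℝ (Fin N))) (f : EuclideanSpace ℝ (Fin N) → ℝ)
    (hf : ∀ x, 0 ≤ f x)
    (hμf : μ = (stdGaussianE (Fin N)).withDensity fun x => ENNReal.ofReal (f x))
    (hP : MemP μ)
    (hconv : ∃ ν : Measure (EuclideanSpace ℝ (Fin N)), IsProbabilityMeasure ν ∧
      μ = (ν.prod (stdGaussianE (Fin N))).map fun q => q.1 + q.2)
    (t : ℝ) (ht : t ∈ Set.Ioo (0 : ℝ) 1) :
    ∀ (x v : EuclideanSpace ℝ (Fin N)),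
      0 ≤ iteratedFDeriv ℝ 2 (fun y => Real.log (heat (1 - t) f y)) x ![v, v] := by
  intro x v
  have hs : 1 - t ∈ Set.Ioo (0 : ℝ) 1 := ⟨by linarith [ht.2], by linarith [ht.1]⟩
  -- `f` is not assumed measurable; if it is not a.e. measurable, `heat (1 - t) f` vanishes
  -- identically, and so does `Real.log` of it.
  by_cases hfm : AEMeasurable f volume
  swap
  · rw [heat_eq_zero_of_not_aemeasurable hfm hs.1, iteratedFDeriv_two_apply]
    simp
  obtain ⟨ν, hν, hμν⟩ := hconv
  have hac : stdGaussianE (Fin N) ≪ volume := withDensity_absolutelyContinuous _ _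
  have hμ : IsProbabilityMeasure μ := hP.1
  have hfin : ∫⁻ y, ENNReal.ofReal (f y) ∂(stdGaussianE (Fin N)) ≠ ∞ := by
    rw [← setLIntegral_univ, ← withDensity_apply _ MeasurableSet.univ, ← hμf]
    exact measure_ne_top _ _
  have hfν : (fun y => ENNReal.ofReal (f y)) =ᵐ[stdGaussianE (Fin N)] convDensity ν := by
    refine (withDensity_eq_iff (hfm.mono_ac hac).ennreal_ofReal
      (measurable_convDensity ν).aemeasurable hfin).1 ?_
    rw [← hμf, hμν, map_add_stdGaussianE]
  rw [heat_eq_gaussLaplace hf hfm (volume_absolutelyContinuous_stdGaussianE.ae_eq hfν) hs]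
  exact iteratedFDeriv_log_gaussLaplace_nonneg ν (by linarith [ht.1]) x v
end

section
/- Let B_1 = [[1,0,1],[0,1,1]] : ℝ³ → ℝ², B_2 = [1,0,0] : ℝ³ → ℝ, B_3 = [0,1,0] : ℝ³ → ℝ. Let C_1 be any invertible 2×2 real matrix and C = diag(C_1, 1) : ℝ³ → ℝ³. Define the subspaces E^j = col(C^{-T} B_j^T) ⊂ ℝ³ for j = 1,2,3, where col denotes column space. Then for every choice of subspaces V_1, V_2, V_3 with each V_j equal to E^j or to its orthogonal complement (E^j)^⊥ in ℝ³, one has V_1 ∩ V_2 ∩ V_3 = {0}. -/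
/-!
Put `C₁⁻¹ = (p; q)` in rows, so that `p, q ∈ ℝ²` are linearly independent. Then
`E¹ = span {(p, 1), (q, 1)}`, `E² = span {(p, 0)}` and `E³ = span {(q, 0)}`.

* `E²` meets both `E¹` and `(E¹)ᗮ` trivially: the horizontal vectors of `E¹` are the
  multiples of `(p - q, 0)`, none of which but `0` is a multiple of `(p, 0)`, and
  `t (p, 0) ⟂ (p, 1)` says `t ‖p‖² = 0`. The same holds for `E³`, with `q` in place of `p`.
* `(E²)ᗮ ⊓ (E³)ᗮ` is the vertical axis, which meets `E¹` trivially because `p, q` are independent,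
  and `(E¹)ᗮ` trivially because `(p, 1)` has non-zero height.

Everything is carried out in coordinates; the independence of `p, q` is used as
`p₀ q₁ - p₁ q₀ ≠ 0`.
-/

open Matrix

/-- The inverse of `diag(C₁, 1)` is again of the form `diag(·, 1)`, with invertible `2×2` block. -/
lemma exists_inv_eq (C1 : Matrix (Fin 2) (Fin 2) ℝ) (hC1 : IsUnit C1) :
    ∃ p0 p1 q0 q1 : ℝ, p0 * q1 - p1 * q0 ≠ 0 ∧
      (!![C1 0 0, C1 0 1, 0; C1 1 0, C1 1 1, 0; 0, 0, 1] : Matrix (Fin 3) (Fin 3) ℝ)⁻¹ =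
        !![p0, p1, 0; q0, q1, 0; 0, 0, 1] := by
  have hd : C1 0 0 * C1 1 1 - C1 0 1 * C1 1 0 ≠ 0 := by
    have h := ((Matrix.isUnit_iff_isUnit_det _).1 hC1).ne_zero
    rwa [Matrix.det_fin_two] at h
  set d := C1 0 0 * C1 1 1 - C1 0 1 * C1 1 0 with hdd
  refine ⟨C1 1 1 / d, -C1 0 1 / d, -C1 1 0 / d, C1 0 0 / d, ?_, ?_⟩
  · have : C1 1 1 / d * (C1 0 0 / d) - -C1 0 1 / d * (-C1 1 0 / d) = 1 / d := by
      field_simp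
      rw [hdd]; ring
    rw [this]
    exact one_div_ne_zero hd
  · apply Matrix.inv_eq_right_inv
    ext i j
    fin_cases i <;> fin_cases j <;>
      simp [Matrix.mul_apply, Fin.sum_univ_three] <;> field_simp <;> rw [hdd] <;> ring

section Coordinates

variable (p0 p1 q0 q1 : ℝ) (x : EuclideanSpace ℝ (Fin 3))

lemma coords_of_mem_E1
    (hx : x ∈ LinearMap.range (Matrix.toEuclideanLin
      ((!![p0, p1, 0; q0, q1, 0; 0, 0, 1] : Matrix (Fin 3) (Fin 3) ℝ)ᵀ *
        ((!![1,0,1; 0,1,1] : Matrix (Fin 2) (Fin 3) ℝ)ᵀ)))) :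
    ∃ a b : ℝ, x 0 = a * p0 + b * q0 ∧ x 1 = a * p1 + b * q1 ∧ x 2 = a + b := by
  obtain ⟨y, rfl⟩ := hx
  refine ⟨y 0, y 1, ?_, ?_, ?_⟩ <;>
    simp [Matrix.toLpLin_apply, Matrix.mulVec, dotProduct, Matrix.mul_apply,
      Fin.sum_univ_three, Fin.sum_univ_two] <;> ring

lemma coords_of_mem_E2
    (hx : x ∈ LinearMap.range (Matrix.toEuclideanLin
      ((!![p0, p1, 0; q0, q1, 0; 0, 0, 1] : Matrix (Fin 3) (Fin 3) ℝ)ᵀ *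
        ((!![1,0,0] : Matrix (Fin 1) (Fin 3) ℝ)ᵀ)))) :
    ∃ t : ℝ, x 0 = t * p0 ∧ x 1 = t * p1 ∧ x 2 = 0 := by
  obtain ⟨y, rfl⟩ := hx
  refine ⟨y 0, ?_, ?_, ?_⟩ <;>
    simp [Matrix.toLpLin_apply, Matrix.mulVec, dotProduct, Matrix.mul_apply,
      Fin.sum_univ_three] <;> ring

lemma coords_of_mem_E3
    (hx : x ∈ LinearMap.range (Matrix.toEuclideanLin
      ((!![p0, p1, 0; q0, q1, 0; 0, 0, 1] : Matrix (Fin 3) (Fin 3) ℝ)ᵀ *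
        ((!![0,1,0] : Matrix (Fin 1) (Fin 3) ℝ)ᵀ)))) :
    ∃ t : ℝ, x 0 = t * q0 ∧ x 1 = t * q1 ∧ x 2 = 0 := by
  obtain ⟨y, rfl⟩ := hx
  refine ⟨y 0, ?_, ?_, ?_⟩ <;>
    simp [Matrix.toLpLin_apply, Matrix.mulVec, dotProduct, Matrix.mul_apply,
      Fin.sum_univ_three] <;> ring

lemma coords_of_mem_E1_orthogonal
    (hx : x ∈ (LinearMap.range (Matrix.toEuclideanLin
      ((!![p0, p1, 0; q0, q1, 0; 0, 0, 1] : Matrix (Fin 3) (Fin 3) ℝ)ᵀ *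
        ((!![1,0,1; 0,1,1] : Matrix (Fin 2) (Fin 3) ℝ)ᵀ))))ᗮ) :
    x 0 * p0 + x 1 * p1 + x 2 = 0 ∧ x 0 * q0 + x 1 * q1 + x 2 = 0 := by
  rw [Submodule.mem_orthogonal] at hx
  have h1 := hx _ (LinearMap.mem_range_self _ !₂[1, 0])
  have h2 := hx _ (LinearMap.mem_range_self _ !₂[0, 1])
  simp [Matrix.toLpLin_apply, Matrix.mulVec, dotProduct, Matrix.mul_apply,
    Fin.sum_univ_three, PiLp.inner_apply] at h1 h2
  exact ⟨h1, h2⟩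

lemma coords_of_mem_E2_orthogonal
    (hx : x ∈ (LinearMap.range (Matrix.toEuclideanLin
      ((!![p0, p1, 0; q0, q1, 0; 0, 0, 1] : Matrix (Fin 3) (Fin 3) ℝ)ᵀ *
        ((!![1,0,0] : Matrix (Fin 1) (Fin 3) ℝ)ᵀ))))ᗮ) :
    x 0 * p0 + x 1 * p1 = 0 := by
  rw [Submodule.mem_orthogonal] at hx
  have h1 := hx _ (LinearMap.mem_range_self _ !₂[1])
  simpa [Matrix.toLpLin_apply, Matrix.mulVec, dotProduct, Matrix.mul_apply,
    Fin.sum_univ_three, PiLp.inner_apply] using h1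

lemma coords_of_mem_E3_orthogonal
    (hx : x ∈ (LinearMap.range (Matrix.toEuclideanLin
      ((!![p0, p1, 0; q0, q1, 0; 0, 0, 1] : Matrix (Fin 3) (Fin 3) ℝ)ᵀ *
        ((!![0,1,0] : Matrix (Fin 1) (Fin 3) ℝ)ᵀ))))ᗮ) :
    x 0 * q0 + x 1 * q1 = 0 := by
  rw [Submodule.mem_orthogonal] at hx
  have h1 := hx _ (LinearMap.mem_range_self _ !₂[1])
  simpa [Matrix.toLpLin_apply, Matrix.mulVec, dotProduct, Matrix.mul_apply,
    Fin.sum_univ_three, PiLp.inner_apply] using h1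

end Coordinates

/-- Linear independence of two plane vectors with non-zero determinant. -/
lemma eq_zero_of_comb {p0 p1 q0 q1 a b : ℝ} (hD : p0 * q1 - p1 * q0 ≠ 0)
    (h0 : a * p0 + b * q0 = 0) (h1 : a * p1 + b * q1 = 0) : a = 0 ∧ b = 0 := by
  constructor
  · refine (mul_eq_zero.1 (?_ : a * (p0 * q1 - p1 * q0) = 0)).resolve_right hD
    linear_combination q1 * h0 - q0 * h1
  · refine (mul_eq_zero.1 (?_ : b * (p0 * q1 - p1 * q0) = 0)).resolve_right hD
    linear_combination p0 * h1 - p1 * h0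

/-- The line spanned by `(p, 0)` meets `(p, 1)ᗮ` trivially. -/
lemma eq_zero_of_sq {u v t x0 x1 x2 : ℝ} (h0 : x0 = t * u) (h1 : x1 = t * v) (h2 : x2 = 0)
    (h : x0 * u + x1 * v + x2 = 0) : x0 = 0 ∧ x1 = 0 ∧ x2 = 0 := by
  have hs : x0 ^ 2 + x1 ^ 2 = 0 := by
    subst h0 h1 h2
    linear_combination t * h
  exact ⟨by nlinarith [sq_nonneg x0, sq_nonneg x1], by nlinarith [sq_nonneg x0, sq_nonneg x1], h2⟩

/-- With `B₁ = [[1,0,1],[0,1,1]]`, `B₂ = [1,0,0]`, `B₃ = [0,1,0]`,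
`C = diag(C₁, 1)` for any invertible `2×2` matrix `C₁`, and `Eʲ = col(C^{-T} Bⱼᵀ) ⊆ ℝ³`,
every choice of `Vⱼ ∈ {Eʲ, (Eʲ)ᗮ}` satisfies `V₁ ⊓ V₂ ⊓ V₃ = {0}`. -/
theorem no_independent_subspaces_example
    (C1 : Matrix (Fin 2) (Fin 2) ℝ) (hC1 : IsUnit C1)
    (C : Matrix (Fin 3) (Fin 3) ℝ)
    (hC : C = !![C1 0 0, C1 0 1, 0; C1 1 0, C1 1 1, 0; 0, 0, 1])
    (E1 E2 E3 : Submodule ℝ (EuclideanSpace ℝ (Fin 3)))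
    (hE1 : E1 = LinearMap.range (Matrix.toEuclideanLin
      (((C⁻¹)ᵀ) * ((!![1,0,1; 0,1,1] : Matrix (Fin 2) (Fin 3) ℝ)ᵀ))))
    (hE2 : E2 = LinearMap.range (Matrix.toEuclideanLin
      (((C⁻¹)ᵀ) * ((!![1,0,0] : Matrix (Fin 1) (Fin 3) ℝ)ᵀ))))
    (hE3 : E3 = LinearMap.range (Matrix.toEuclideanLin
      (((C⁻¹)ᵀ) * ((!![0,1,0] : Matrix (Fin 1) (Fin 3) ℝ)ᵀ))))
    (V1 V2 V3 : Submodule ℝ (EuclideanSpace ℝ (Fin 3)))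
    (hV1 : V1 = E1 ∨ V1 = E1ᗮ) (hV2 : V2 = E2 ∨ V2 = E2ᗮ)
    (hV3 : V3 = E3 ∨ V3 = E3ᗮ) :
    V1 ⊓ V2 ⊓ V3 = ⊥ := by
  obtain ⟨p0, p1, q0, q1, hD, hinv⟩ := exists_inv_eq C1 hC1
  rw [hC, hinv] at hE1 hE2 hE3
  rw [eq_bot_iff]
  rintro x ⟨⟨hx1, hx2⟩, hx3⟩
  suffices h : x 0 = 0 ∧ x 1 = 0 ∧ x 2 = 0 by
    rw [Submodule.mem_bot]
    ext i
    fin_cases i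
    exacts [h.1, h.2.1, h.2.2]
  have h1 : (∃ a b : ℝ, x 0 = a * p0 + b * q0 ∧ x 1 = a * p1 + b * q1 ∧ x 2 = a + b) ∨
      (x 0 * p0 + x 1 * p1 + x 2 = 0 ∧ x 0 * q0 + x 1 * q1 + x 2 = 0) := by
    rcases hV1 with rfl | rfl <;> subst hE1
    · exact Or.inl (coords_of_mem_E1 _ _ _ _ _ hx1)
    · exact Or.inr (coords_of_mem_E1_orthogonal _ _ _ _ _ hx1)
  have h2 : (∃ t : ℝ, x 0 = t * p0 ∧ x 1 = t * p1 ∧ x 2 = 0) ∨ x 0 * p0 + x 1 * p1 = 0 := by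
    rcases hV2 with rfl | rfl <;> subst hE2
    · exact Or.inl (coords_of_mem_E2 _ _ _ _ _ hx2)
    · exact Or.inr (coords_of_mem_E2_orthogonal _ _ _ _ _ hx2)
  have h3 : (∃ t : ℝ, x 0 = t * q0 ∧ x 1 = t * q1 ∧ x 2 = 0) ∨ x 0 * q0 + x 1 * q1 = 0 := by
    rcases hV3 with rfl | rfl <;> subst hE3
    · exact Or.inl (coords_of_mem_E3 _ _ _ _ _ hx3)
    · exact Or.inr (coords_of_mem_E3_orthogonal _ _ _ _ _ hx3)
  rcases h2 with ⟨t, t0, t1, t2⟩ | h2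
  -- `x = t (p, 0)`: the condition on `E¹` alone forces `x = 0`
  · rcases h1 with ⟨a, b, a0, a1, a2⟩ | ⟨h, -⟩
    · obtain ⟨ha, hb⟩ := eq_zero_of_comb (a := a - t) (b := b) hD
        (by linear_combination t0 - a0) (by linear_combination t1 - a1)
      have ht : t = 0 := by linarith
      simp [t0, t1, t2, ht]
    · exact eq_zero_of_sq t0 t1 t2 h
  rcases h3 with ⟨t, t0, t1, t2⟩ | h3
  -- `x = t (q, 0)`: symmetric to the previous case
  · rcases h1 with ⟨a, b, a0, a1, a2⟩ | ⟨-, h⟩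
    · obtain ⟨ha, hb⟩ := eq_zero_of_comb (a := a) (b := b - t) hD
        (by linear_combination t0 - a0) (by linear_combination t1 - a1)
      have ht : t = 0 := by linarith
      simp [t0, t1, t2, ht]
    · exact eq_zero_of_sq t0 t1 t2 h
  -- `x ⟂ (p, 0), (q, 0)`: `x` is vertical, by independence of the columns of `(p; q)`
  obtain ⟨x0, x1⟩ := eq_zero_of_comb (p0 := p0) (p1 := q0) (q0 := p1) (q1 := q1)
    (by convert hD using 1; ring) h2 h3
  refine ⟨x0, x1, ?_⟩
  rcases h1 with ⟨a, b, a0, a1, a2⟩ | ⟨h, -⟩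
  · obtain ⟨ha, hb⟩ := eq_zero_of_comb hD (a0.symm.trans x0) (a1.symm.trans x1)
    rw [a2, ha, hb, add_zero]
  · linarith
end
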